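/- arXiv:math/0201003 — 3 statements merged into one kernel-verified Lean document; each statement's English description precedes it below -/
import Mathlib

section
/- (Sign Decomposition Theorem) Let k ≥ 2, let λ be a partition with empty k-core, let μ be a partition of p := |λ|/k, and let T ∈ RHT_{kμ}^λ. If ω_{kμ}^λ(T) = (T_1,…,T_k), then sign(π_T) = sign(π_λ) · sign(π_{T_1}) ··· sign(π_{T_k}). -/
open scoped BigOperators

namespace RimHookPaper

/-- A partition: a weakly decreasing, eventually-zero sequence of naturals;
`parts n` is the `(n+1)`-st part. -/
structure Partition : Type where
  parts : ℕ → ℕ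
  antitone : ∀ ⦃i j : ℕ⦄, i ≤ j → parts j ≤ parts i
  eventually_zero : ∃ N : ℕ, ∀ i : ℕ, N ≤ i → parts i = 0

namespace Partition

/-- The size `|λ|` of a partition. -/
noncomputable def size (P : Partition) : ℕ := ∑ᶠ i, P.parts i

/-- The empty partition. -/
def empty : Partition := ⟨fun _ => 0, fun _ _ _ => le_rfl, ⟨0, fun _ _ => rfl⟩⟩

/-- The number of nonzero parts of a partition. -/
noncomputable def length (P : Partition) : ℕ := sInf {N | P.parts N = 0}

/-- The cells of the Young diagram of a partition. -/
def cells (P : Partition) : Set (ℕ × ℕ) := {c | c.2 < P.parts c.1}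

instance : LE Partition := ⟨fun Q P => ∀ i, Q.parts i ≤ P.parts i⟩

/-- The skew shape `P / Q` (as a set of cells). -/
def skew (P Q : Partition) : Set (ℕ × ℕ) := P.cells \ Q.cells

end Partition

/-- Edge-adjacency of cells. -/
def Adj (c d : ℕ × ℕ) : Prop :=
  (c.1 = d.1 ∧ (c.2 + 1 = d.2 ∨ d.2 + 1 = c.2)) ∨
    (c.2 = d.2 ∧ (c.1 + 1 = d.1 ∨ d.1 + 1 = c.1))

/-- A set of cells is (edge-)connected. -/
def IsConnectedSet (S : Set (ℕ × ℕ)) : Prop :=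
  ∀ c ∈ S, ∀ d ∈ S, Relation.ReflTransGen (fun x y => x ∈ S ∧ y ∈ S ∧ Adj x y) c d

/-- `S` contains no 2×2 square. -/
def NoSquare (S : Set (ℕ × ℕ)) : Prop :=
  ¬ ∃ i j : ℕ, (i, j) ∈ S ∧ (i + 1, j) ∈ S ∧ (i, j + 1) ∈ S ∧ (i + 1, j + 1) ∈ S

/-- `P / Q` is a rim hook (border strip) of length `t`: a nonempty connected skew
shape with no 2×2 square, consisting of `t` boxes. -/
def IsRimHook (P Q : Partition) (t : ℕ) : Prop :=
  Q ≤ P ∧ (P.skew Q).Nonempty ∧ IsConnectedSet (P.skew Q) ∧ NoSquare (P.skew Q) ∧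
    (P.skew Q).ncard = t

/-- One step of a rim hook tableau: an empty hook (`t = 0`) or a rim hook of length `t`. -/
def IsStep (P Q : Partition) (t : ℕ) : Prop :=
  (t = 0 ∧ P = Q) ∨ (0 < t ∧ IsRimHook P Q t)

/-- Number of rows met by a set of cells. -/
noncomputable def rowCount (S : Set (ℕ × ℕ)) : ℕ := (Prod.fst '' S).ncard

/-- A rim hook tableau of shape `P` and type `μ`: a chain
`∅ = λ⁰ ⊆ λ¹ ⊆ ⋯ ⊆ λʳ = P` with each `λⁱ/λⁱ⁻¹` a (possibly empty)
rim hook of length `μᵢ`. -/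
structure RHT (P : Partition) (μ : List ℕ) : Type where
  chain : Fin (μ.length + 1) → Partition
  chain_zero : chain 0 = Partition.empty
  chain_last : chain (Fin.last μ.length) = P
  step : ∀ j : Fin μ.length, IsStep (chain j.succ) (chain j.castSucc) (μ.get j)

/-- The total height of a rim hook tableau: the sum of the heights
(number of rows minus one) of its nonempty rim hooks. -/
noncomputable def RHT.height {P : Partition} {μ : List ℕ} (T : RHT P μ) : ℕ :=
  ∑ j : Fin μ.length, (rowCount ((T.chain j.succ).skew (T.chain j.castSucc)) - 1)

/-- The character value `χ^λ_μ` of the symmetric group, via the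
Murnaghan–Nakayama rule. -/
noncomputable def chiAux (P : Partition) (μ : List ℕ) : ℤ :=
  ∑ᶠ T : RHT P μ, (-1 : ℤ) ^ T.height

/-- The parts of a multiset, listed in weakly decreasing order. -/
def typeList (μ : Multiset ℕ) : List ℕ := (μ.sort (· ≤ ·)).reverse

/-- `χ^λ_μ` for a multiset type `μ`. -/
noncomputable def chi (P : Partition) (μ : Multiset ℕ) : ℤ := chiAux P (typeList μ)

/-- `z_μ = ∏_j m_j! · j^{m_j}` where `μ` has `m_j` parts equal to `j`. -/
def zpart (μ : Multiset ℕ) : ℕ := μ.prod * ∏ j ∈ μ.toFinset, (μ.count j).factorial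

/-- `χ^λ(σ)`: the character evaluated at a permutation, via its full cycle type
(including fixed points as parts equal to 1). -/
noncomputable def chiPerm (P : Partition) {m : ℕ} (σ : Equiv.Perm (Fin m)) : ℤ :=
  chi P (σ.cycleType + Multiset.replicate (m - σ.cycleType.sum) 1)

/-- Position of the zero (up step) corresponding to row `n` in the 0/1 sequence
`s(P)`, where the median of `s(P)` is the gap just below position `0`. -/
def zpos (P : Partition) (n : ℕ) : ℤ := (P.parts n : ℤ) - (n : ℤ) - 1

/-- `s(P)` has a `0` (an up step) at position `x`; otherwise it has a `1`. -/
def isZeroAt (P : Partition) (x : ℤ) : Prop := ∃ n : ℕ, zpos P n = x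

/-- `Q` is the `k`-quotient of `P`: for each residue `i`, the 0/1 sequence of `Q i`
is (up to the shift `d` recording the position of its median) the subsequence of
`s(P)` consisting of every `k`-th digit, including the `(i+1)`-st digit after the
median of `s(P)`. -/
def IsKQuotient (k : ℕ) (P : Partition) (Q : Fin k → Partition) : Prop :=
  ∀ i : Fin k, ∃ d : ℤ, ∀ j : ℤ,
    isZeroAt (Q i) j ↔ isZeroAt P (((i : ℕ) : ℤ) + (j + d) * (k : ℤ))

/-- `C` is the `k`-core of `P`: it is obtained from `P` by successively removing
rim hooks of length `k`, as long as possible. -/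
def IsKCore (k : ℕ) (P C : Partition) : Prop :=
  Relation.ReflTransGen (fun A B => IsRimHook A B k) P C ∧ ¬ ∃ C', IsRimHook C C' k

/-- The map on row indices induced by moving the zero in row `m` down (left)
to row `m'`, the zeros in rows `m+1,…,m'` each moving up one row. -/
def cycleFun (m m' n : ℕ) : ℕ :=
  if n = m then m' else if m < n ∧ n ≤ m' then n - 1 else n

/-- One tracking step for the zero permutation: passing from `A` to `B` by removing
a rim hook, encoded on the 0/1 sequence as interchanging a `1` with a later `0`
(the moved zero, in row `m` of `A`, jumps over `m' - m` zeros, landing in row `m'`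
of `B`); the row of each labeled zero is updated by `cycleFun m m'`. -/
def StepTrack (A B : Partition) (f g : ℕ → ℕ) : Prop :=
  (A = B ∧ g = f) ∨
    ∃ m m' : ℕ, m ≤ m' ∧
      (∀ n, n < m → zpos B n = zpos A n) ∧
      (∀ n, m ≤ n → n < m' → zpos B n = zpos A (n + 1)) ∧
      (∀ n, m' < n → zpos B n = zpos A n) ∧
      g = fun i => cycleFun m m' (f i)

/-- `π` is the zero permutation of the rim hook tableau `T`: label the zeros of
`s(P)` succeeding the first one by `1,…,ℓ(P)` from left to right (`q j i` is the
row of label `i+1` at stage `j` of the peeling, rows counted from the top), peel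
the rim hooks of `T` in order of decreasing entries, and read off the labels in
the final sequence `s(∅)` from left to right. -/
def IsZeroPerm {P : Partition} {μ : List ℕ} (T : RHT P μ)
    (π : Equiv.Perm (Fin P.length)) : Prop :=
  ∃ q : Fin (μ.length + 1) → ℕ → ℕ,
    (∀ i : ℕ, i < P.length → q (Fin.last μ.length) i = P.length - 1 - i) ∧
    (∀ j : Fin μ.length,
      StepTrack (T.chain j.succ) (T.chain j.castSucc) (q j.succ) (q j.castSucc)) ∧
    (∀ i : Fin P.length, q 0 ((π i : ℕ)) = P.length - 1 - (i : ℕ))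

/-- `ω(T) = (T₁,…,T_k)`: the rim hook tableau `T` (all of whose hook lengths are
divisible by `k`) decomposes into the `k`-tuple of rim hook tableaux `Ti` on the
`k`-quotient: each step of `T`, removing a hook of length `k·t`, affects exactly
one subsequence (mod `k`) of the 0/1 sequence, i.e. removes a hook of length `t`
from exactly one of the quotient partitions. -/
def OmegaRel (k : ℕ) {P : Partition} {κ : List ℕ} (T : RHT P κ)
    {Q : Fin k → Partition} {ν : Fin k → List ℕ}
    (Ti : ∀ i : Fin k, RHT (Q i) (ν i)) : Prop :=
  ∃ (QC : Fin (κ.length + 1) → Fin k → Partition) (a : Fin κ.length → Fin k),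
    (∀ j, IsKQuotient k (T.chain j) (QC j)) ∧
    (∀ j : Fin κ.length, ∀ i, i ≠ a j → QC j.castSucc i = QC j.succ i) ∧
    (∀ j : Fin κ.length, ∃ t : ℕ, κ.get j = k * t ∧
      IsStep (QC j.succ (a j)) (QC j.castSucc (a j)) t) ∧
    (∀ i : Fin k, ∃ e : Fin (ν i).length → Fin κ.length,
      StrictMono e ∧ (∀ s, a (e s) = i) ∧ (∀ j, a j = i → ∃ s, e s = j) ∧
      (∀ s, k * (ν i).get s = κ.get (e s)) ∧
      (Ti i).chain 0 = QC 0 i ∧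
      (∀ s : Fin (ν i).length, (Ti i).chain s.succ = QC (Fin.succ (e s)) i))

/-!
Regard the zeros of `s(λ)` as beads on a line. Removing a rim hook moves a bead from `x` down to a
vacant place `y`, and it multiplies the sign of the zero permutation by `(-1) ^ h`, where `h` is
the number of beads jumped over. Suppose that `k` divides `x - y`. The jumped beads of the same
residue modulo `k` as `x` are those jumped over in the corresponding subsequence, so they account
for the sign of the induced step in the `k`-quotient. The parity of the number of the other jumped
beads is the change in the sign of the permutation that sorts the beads by their residues. Over a
whole tableau these changes telescope to a factor that depends only on `λ`. This factor is
`sign π_λ`, because a bead moved by exactly `k` places jumps over no bead of its own residue.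
-/

/-- `S'` arises from the set of beads `S` by moving the bead at `x` to the vacant place `y`. -/
structure BeadMove {α : Type*} (S S' : Set α) (x y : α) : Prop where
  source_mem : x ∈ S
  target_notMem : y ∉ S
  eq_insert : S' = insert y (S \ {x})

namespace BeadMove

variable {α β : Type*} {S S' : Set α} {x y : α}

theorem ne (h : BeadMove S S' x y) : x ≠ y :=
  ne_of_mem_of_not_mem h.source_mem h.target_notMem

theorem sdiff_eq (h : BeadMove S S' x y) : S \ S' = {x} := by
  have := h.ne
  have := h.source_mem
  have := h.target_notMem
  ext z
  simp only [h.eq_insert, Set.mem_sdiff, Set.mem_insert_iff, Set.mem_singleton_iff]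
  grind

theorem sdiff_eq' (h : BeadMove S S' x y) : S' \ S = {y} := by
  have := h.target_notMem
  ext z
  simp only [h.eq_insert, Set.mem_sdiff, Set.mem_insert_iff, Set.mem_singleton_iff]
  grind

theorem inter_of_mem (h : BeadMove S S' x y) {U : Set α} (hx : x ∈ U) (hy : y ∈ U) :
    BeadMove (S ∩ U) (S' ∩ U) x y where
  source_mem := ⟨h.source_mem, hx⟩
  target_notMem hy' := h.target_notMem hy'.1
  eq_insert := by
    ext z
    simp only [h.eq_insert, Set.mem_inter_iff, Set.mem_insert_iff, Set.mem_sdiff,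
      Set.mem_singleton_iff]
    grind

theorem inter_of_notMem (h : BeadMove S S' x y) {U : Set α} (hx : x ∉ U) (hy : y ∉ U) :
    S ∩ U = S' ∩ U := by
  ext z
  simp only [h.eq_insert, Set.mem_inter_iff, Set.mem_insert_iff, Set.mem_sdiff,
    Set.mem_singleton_iff]
  grind

theorem preimage {f : β → α} (hf : Function.Injective f) {u v : β}
    (h : BeadMove S S' (f u) (f v)) : BeadMove (f ⁻¹' S) (f ⁻¹' S') u v where
  source_mem := h.source_mem
  target_notMem := h.target_notMem
  eq_insert := by
    ext z
    simp [h.eq_insert, hf.eq_iff]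

theorem preimage_eq_or_exists {f : β → α} (hf : Function.Injective f) (h : BeadMove S S' x y)
    (hxy : x ∈ Set.range f ↔ y ∈ Set.range f) :
    f ⁻¹' S = f ⁻¹' S' ∨ ∃ u v, BeadMove (f ⁻¹' S) (f ⁻¹' S') u v := by
  by_cases hx : x ∈ Set.range f
  · obtain ⟨v, rfl⟩ := hxy.1 hx
    obtain ⟨u, rfl⟩ := hx
    exact .inr ⟨u, v, h.preimage hf⟩
  · left
    rw [← Set.preimage_inter_range, h.inter_of_notMem hx (hx ∘ hxy.2), Set.preimage_inter_range]

end BeadMove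

section MoveSign

variable {α β : Type*} [LinearOrder α]

/-- The beads of `S` lying strictly between the old and the new place of a bead that is moved
down to turn `S` into `S'`. The two places are read off from `S \ S'` and `S' \ S`, so that the
notion depends on the two sets only. -/
def jumpedBeads (S S' : Set α) : Set α :=
  {z ∈ S | ∃ x ∈ S \ S', ∃ y ∈ S' \ S, z ∈ Set.Ioo y x}

/-- The sign `(-1) ^ h`, where `h` is the number of beads jumped over when passing from `S` to
`S'`. On the zeros of a partition, `h` is the height of the rim hook that is removed. -/
noncomputable def moveSign (S S' : Set α) : ℤˣ := (-1) ^ (jumpedBeads S S').ncard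

theorem moveSign_self (S : Set α) : moveSign S S = 1 := by
  simp [moveSign, jumpedBeads]

theorem jumpedBeads_image [LinearOrder β] {f : α → β} (hf : StrictMono f) (S S' : Set α) :
    jumpedBeads (f '' S) (f '' S') = f '' jumpedBeads S S' := by
  simp only [jumpedBeads, ← Set.image_sdiff hf.injective]
  ext z
  constructor
  · rintro ⟨⟨w, hw, rfl⟩, _, ⟨x, hx, rfl⟩, _, ⟨y, hy, rfl⟩, hyw, hwx⟩
    exact ⟨w, ⟨hw, x, hx, y, hy, hf.lt_iff_lt.1 hyw, hf.lt_iff_lt.1 hwx⟩, rfl⟩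
  · rintro ⟨w, ⟨hw, x, hx, y, hy, hyw, hwx⟩, rfl⟩
    exact ⟨⟨w, hw, rfl⟩, f x, ⟨x, hx, rfl⟩, f y, ⟨y, hy, rfl⟩, hf hyw, hf hwx⟩

theorem moveSign_preimage [LinearOrder β] {f : α → β} (hf : StrictMono f) (S S' : Set β) :
    moveSign (f ⁻¹' S) (f ⁻¹' S') = moveSign (S ∩ Set.range f) (S' ∩ Set.range f) := by
  simp only [← Set.image_preimage_eq_inter_range, moveSign, jumpedBeads_image hf,
    Set.ncard_image_of_injective _ hf.injective]

theorem BeadMove.jumpedBeads_eq {S S' : Set α} {x y : α} (h : BeadMove S S' x y) :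
    jumpedBeads S S' = S ∩ Set.Ioo y x := by
  simp [jumpedBeads, h.sdiff_eq, h.sdiff_eq', Set.inter_def]

theorem BeadMove.prod_moveSign_fiber [Fintype β] {S S' : Set α} {x y : α}
    (h : BeadMove S S' x y) (r : α → β) (hr : r x = r y) :
    ∏ i, moveSign (S ∩ r ⁻¹' {i}) (S' ∩ r ⁻¹' {i}) =
      (-1) ^ (S ∩ Set.Ioo y x ∩ r ⁻¹' {r x}).ncard := by
  rw [Finset.prod_eq_single (r x) _ (by simp)]
  · rw [moveSign, (h.inter_of_mem (U := r ⁻¹' {r x}) rfl hr.symm).jumpedBeads_eq,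
      Set.inter_right_comm]
  · intro i _ hi
    have hx : x ∉ r ⁻¹' {i} := fun hx => hi hx.symm
    rw [h.inter_of_notMem hx (by simpa [← hr] using hx), moveSign_self]

end MoveSign

section SortSign

variable {α β : Type*} [LinearOrder α] [LinearOrder β]

/-- The contribution `-1` of a pair that is put out of order by the key `r`. -/
def inversionSign (r : α → β) (z w : α) : ℤˣ := if z < w ∧ r w < r z then -1 else 1

/-- The sign of the permutation that sorts the elements of `F` stably by their keys `r`. -/
def sortSign (r : α → β) (F : Finset α) : ℤˣ := ∏ z ∈ F, ∏ w ∈ F, inversionSign r z w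

theorem sortSign_insert (r : α → β) {x : α} {G : Finset α} (hx : x ∉ G) :
    sortSign r (insert x G) =
      sortSign r G * ∏ z ∈ G, inversionSign r x z * inversionSign r z x := by
  have hxx : inversionSign r x x = 1 := by simp [inversionSign]
  simp only [sortSign, Finset.prod_insert hx, Finset.prod_mul_distrib, hxx, one_mul]
  ac_rfl

theorem inversionSign_mul_inversionSign {r : α → β} {x y z : α} (hyx : y < x) (hr : r x = r y)
    (hzx : z ≠ x) (hzy : z ≠ y) :
    inversionSign r x z * inversionSign r z x * (inversionSign r y z * inversionSign r z y) =
      if z ∈ Set.Ioo y x ∧ r z ≠ r x then -1 else 1 := by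
  simp only [inversionSign, ← hr, Set.mem_Ioo]
  rcases lt_trichotomy (r z) (r x) with h | h | h <;>
  rcases lt_or_gt_of_ne hzx with h₁ | h₁ <;>
  rcases lt_or_gt_of_ne hzy with h₂ | h₂ <;>
  grind [Int.units_mul_self]

theorem sortSign_insert_mul_sortSign_insert {r : α → β} {x y : α} {G : Finset α} (hyx : y < x)
    (hr : r x = r y) (hx : x ∉ G) (hy : y ∉ G) :
    sortSign r (insert x G) * sortSign r (insert y G) =
      (-1) ^ {z ∈ G | z ∈ Set.Ioo y x ∧ r z ≠ r x}.card := by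
  rw [sortSign_insert r hx, sortSign_insert r hy, mul_mul_mul_comm, Int.units_mul_self, one_mul,
    ← Finset.prod_mul_distrib]
  have hpair (z : α) (hz : z ∈ G) := inversionSign_mul_inversionSign hyx hr
    (ne_of_mem_of_not_mem hz hx) (ne_of_mem_of_not_mem hz hy)
  simp [Finset.prod_congr rfl hpair, Finset.prod_ite]

theorem BeadMove.moveSign_eq_sortSign_mul {S S' : Set α} {x y l : α} (h : BeadMove S S' x y)
    (hyx : y < x) {r : α → β} (hr : r x = r y) (hl : l ≤ y) {F F' : Finset α}
    (hF : (F : Set α) = S ∩ Set.Ici l) (hF' : (F' : Set α) = S' ∩ Set.Ici l) :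
    moveSign S S' =
      sortSign r F * sortSign r F' * (-1) ^ (S ∩ Set.Ioo y x ∩ r ⁻¹' {r x}).ncard := by
  have hmove : BeadMove (F : Set α) F' x y := by
    rw [hF, hF']
    exact h.inter_of_mem (hl.trans hyx.le) hl
  have hxF : insert x (F.erase x) = F := Finset.insert_erase (mod_cast hmove.source_mem)
  have hyF : insert y (F.erase x) = F' := by
    rw [← Finset.coe_inj, hmove.eq_insert]
    simp
  have hy : y ∉ F.erase x := fun hy =>
    hmove.target_notMem (Finset.mem_coe.2 (Finset.mem_of_mem_erase hy))
  have hjump : S ∩ Set.Ioo y x = ({z ∈ F.erase x | z ∈ Set.Ioo y x} : Finset α) := by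
    ext z
    have : z ∈ F ↔ z ∈ S ∧ l ≤ z := by rw [← Finset.mem_coe, hF]; rfl
    simp only [Set.mem_inter_iff, Set.mem_Ioo, Finset.coe_filter, Finset.mem_erase,
      Set.mem_ofPred_eq]
    grind
  have hsame : S ∩ Set.Ioo y x ∩ r ⁻¹' {r x} =
      ({z ∈ F.erase x | z ∈ Set.Ioo y x ∧ r z = r x} : Finset α) := by
    rw [hjump, ← Finset.filter_filter]
    ext z
    simp
  rw [moveSign, h.jumpedBeads_eq, hsame, hjump, Set.ncard_coe_finset, Set.ncard_coe_finset,
    ← hxF, ← hyF, Finset.erase_insert (Finset.notMem_erase x F),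
    sortSign_insert_mul_sortSign_insert hyx hr (Finset.notMem_erase x F) hy, ← pow_add, add_comm]
  congr 1
  rw [← Finset.filter_filter, ← Finset.filter_filter, Finset.card_filter_add_card_filter_not]

end SortSign

section Runner

/-- The residue of `z` modulo `k`, as an element of `Fin k`; it names the subsequence of the 0/1
sequence that contains the digit at `z`. -/
def residue (k : ℕ) [NeZero k] (z : ℤ) : Fin k := (Int.divModEquiv k z).2

/-- The `i`-th subsequence of every `k`-th digit: its `j`-th digit is the digit of `S` at
`i + j * k`. -/
def runner {k : ℕ} (i : Fin k) (S : Set ℤ) : Set ℤ := {j | (i : ℤ) + j * k ∈ S}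

variable {k : ℕ} [NeZero k]

theorem strictMono_add_mul_natCast (i : ℤ) : StrictMono fun j : ℤ => i + j * k := by
  have hk : (0 : ℤ) < k := mod_cast NeZero.pos k
  intro a b hab
  simpa using mul_lt_mul_of_pos_right hab hk

theorem residue_eq_iff {z : ℤ} {i : Fin k} : residue k z = i ↔ ∃ j : ℤ, (i : ℤ) + j * k = z := by
  constructor
  · rintro rfl
    exact ⟨(Int.divModEquiv k z).1, (add_comm _ _).trans ((Int.divModEquiv k).symm_apply_apply z)⟩
  · rintro ⟨j, rfl⟩
    rw [residue, show (i : ℤ) + j * k = (Int.divModEquiv k).symm (j, i) from add_comm _ _,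
      Equiv.apply_symm_apply]

theorem range_add_mul_natCast (i : Fin k) :
    Set.range (fun j : ℤ => (i : ℤ) + j * k) = residue k ⁻¹' {i} := by
  ext z
  exact residue_eq_iff.symm

theorem residue_eq_residue_iff {x y : ℤ} : residue k x = residue k y ↔ (k : ℤ) ∣ x - y := by
  obtain ⟨j, hj⟩ := residue_eq_iff.1 (rfl : residue k y = _)
  rw [residue_eq_iff]
  constructor
  · rintro ⟨l, hl⟩
    exact ⟨l - j, by linear_combination hj - hl⟩
  · rintro ⟨l, hl⟩
    exact ⟨l + j, by linear_combination hj - hl⟩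

theorem residue_add_of_dvd {t : ℕ} (ht : k ∣ t) (y : ℤ) : residue k (y + t) = residue k y :=
  residue_eq_residue_iff.2 (by simpa using Int.natCast_dvd_natCast.2 ht)

theorem runner_eq_or_beadMove {S S' : Set ℤ} {x y : ℤ} (h : BeadMove S S' x y)
    (hxy : residue k x = residue k y) (i : Fin k) :
    runner i S = runner i S' ∨ ∃ u v, BeadMove (runner i S) (runner i S') u v := by
  refine h.preimage_eq_or_exists (strictMono_add_mul_natCast (i : ℤ)).injective ?_
  rw [range_add_mul_natCast, Set.mem_preimage, Set.mem_preimage, hxy]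

theorem prod_moveSign_runner {S S' : Set ℤ} {x y : ℤ} (h : BeadMove S S' x y)
    (hxy : residue k x = residue k y) :
    ∏ i : Fin k, moveSign (runner i S) (runner i S') =
      (-1) ^ (S ∩ Set.Ioo y x ∩ residue k ⁻¹' {residue k x}).ncard := by
  rw [← h.prod_moveSign_fiber (residue k) hxy]
  refine Finset.prod_congr rfl fun i _ => ?_
  rw [← range_add_mul_natCast, ← moveSign_preimage (strictMono_add_mul_natCast _)]
  rfl

theorem Ioo_inter_residue_eq_empty (y : ℤ) :
    Set.Ioo y (y + k) ∩ residue k ⁻¹' {residue k (y + k)} = ∅ := by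
  rw [Set.eq_empty_iff_forall_notMem]
  rintro z ⟨⟨hyz, hzx⟩, hz⟩
  have hdvd : (k : ℤ) ∣ y + k - z := residue_eq_residue_iff.1 (Eq.symm hz)
  exact absurd (Int.le_of_dvd (by lia) hdvd) (by lia)

end Runner

section Charge

open Filter

/-- A set of beads that fills all sufficiently low places has charge `d` if, eventually, it has
`M + d` elements that are at least `-M`. The zeros of a partition have charge `0`, so the charge
of a subsequence of `s(λ)` records the position of its median. -/
def HasCharge (S : Set ℤ) (d : ℤ) : Prop :=
  ∀ᶠ M : ℤ in atTop, ((S ∩ Set.Ici (-M)).ncard : ℤ) = M + d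

theorem HasCharge.unique {S : Set ℤ} {d e : ℤ} (hd : HasCharge S d) (he : HasCharge S e) :
    d = e := by
  obtain ⟨M, hM, hM'⟩ := (hd.and he).exists
  exact add_left_cancel (hM.symm.trans hM')

theorem HasCharge.of_preimage_add_right {S : Set ℤ} {c d : ℤ}
    (h : HasCharge ((· + c) ⁻¹' S) d) : HasCharge S (d + c) := by
  filter_upwards [(tendsto_atTop_add_const_right atTop c tendsto_id).eventually h] with M hM
  have himage : (· + c) '' ((· + c) ⁻¹' S ∩ Set.Ici (-(M + c))) = S ∩ Set.Ici (-M) := by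
    rw [Set.image_preimage_inter, Set.image_add_const_Ici, neg_add_rev, neg_add_cancel_comm]
  rw [← himage, Set.ncard_image_of_injective _ (add_left_injective c)]
  exact hM.trans (by rw [id, add_assoc, add_comm c])

theorem HasCharge.of_beadMove {S S' : Set ℤ} {x y d : ℤ} (hS : HasCharge S d)
    (h : BeadMove S S' x y) : HasCharge S' d := by
  filter_upwards [hS, eventually_ge_atTop (-x), eventually_ge_atTop (-y)] with M hM hx hy
  have hmove := h.inter_of_mem (U := Set.Ici (-M)) (neg_le.1 hx) (neg_le.1 hy)
  rw [hmove.eq_insert, Set.ncard_exchange hmove.target_notMem hmove.source_mem, hM]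

end Charge

section Zeros

theorem zpos_strictAnti (P : Partition) : StrictAnti (zpos P) := fun m n hmn => by
  have := P.antitone hmn.le
  simp only [zpos]
  lia

theorem parts_eq_zero_of_length_le (P : Partition) {n : ℕ} (hn : P.length ≤ n) :
    P.parts n = 0 := by
  obtain ⟨N, hN⟩ := P.eventually_zero
  have hlength : P.parts P.length = 0 :=
    Nat.sInf_mem (s := {N | P.parts N = 0}) ⟨N, hN N le_rfl⟩
  exact Nat.le_zero.1 (hlength ▸ P.antitone hn)

/-- The positions of the zeros of `s(P)`. -/
def Partition.zeros (P : Partition) : Set ℤ := Set.range (zpos P)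

/-- The `L` rightmost zeros of `s(P)`. -/
def Partition.topZeros (P : Partition) (L : ℕ) : Finset ℤ := (Finset.range L).image (zpos P)

variable {P : Partition} {L : ℕ}

theorem neg_le_zpos_iff (hL : P.length ≤ L) {n : ℕ} : -(L : ℤ) ≤ zpos P n ↔ n < L := by
  have h := @parts_eq_zero_of_length_le P n
  simp only [zpos]
  lia

theorem coe_topZeros (hL : P.length ≤ L) :
    (P.topZeros L : Set ℤ) = P.zeros ∩ Set.Ici (-L) := by
  ext z
  simp only [Partition.topZeros, Partition.zeros, Finset.coe_image, Finset.coe_range,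
    Set.mem_image, Set.mem_Iio, Set.mem_inter_iff, Set.mem_range, Set.mem_Ici]
  constructor
  · rintro ⟨n, hn, rfl⟩
    exact ⟨⟨n, rfl⟩, (neg_le_zpos_iff hL).2 hn⟩
  · rintro ⟨⟨n, rfl⟩, hn⟩
    exact ⟨n, (neg_le_zpos_iff hL).1 hn, rfl⟩

theorem neg_le_of_notMem_zeros (hL : P.length ≤ L) {z : ℤ} (hz : z ∉ P.zeros) :
    -(L : ℤ) ≤ z := by
  by_contra! hlt
  refine hz ⟨(-z - 1).toNat, ?_⟩
  rw [zpos, parts_eq_zero_of_length_le P (by lia)]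
  lia

theorem hasCharge_zeros (P : Partition) : HasCharge P.zeros 0 := by
  filter_upwards [Filter.eventually_ge_atTop (P.length : ℤ)] with M hM
  lift M to ℕ using le_trans (Int.natCast_nonneg _) hM
  rw [← coe_topZeros (mod_cast hM), Set.ncard_coe_finset, Partition.topZeros,
    Finset.card_image_of_injective _ (zpos_strictAnti P).injective, Finset.card_range, add_zero]

/-- The two translations agree because a bead move preserves the charge. -/
theorem moveSign_zeros_eq_of_preimage {A B : Partition} {S S' : Set ℤ} {a b : ℤ}
    (hS : S = S' ∨ ∃ x y, BeadMove S S' x y) (hA : A.zeros = (· + a) ⁻¹' S)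
    (hB : B.zeros = (· + b) ⁻¹' S') : moveSign A.zeros B.zeros = moveSign S S' := by
  have ha : HasCharge S (0 + a) := .of_preimage_add_right (hA ▸ hasCharge_zeros A)
  have hb : HasCharge S' (0 + b) := .of_preimage_add_right (hB ▸ hasCharge_zeros B)
  have hab : a = b := by
    rcases hS with rfl | ⟨x, y, hmove⟩
    · exact add_left_cancel (ha.unique hb)
    · exact add_left_cancel ((ha.of_beadMove hmove).unique hb)
  have hrange : Set.range (· + a) = Set.univ := (Equiv.addRight a).surjective.range_eq
  rw [hA, hB, ← hab, moveSign_preimage (add_left_strictMono (a := a)), hrange, Set.inter_univ,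
    Set.inter_univ]

end Zeros

section HookRemovals

variable {A B : Partition} {m m' : ℕ}

/-- `B` is obtained from `A` by moving the zero of row `m` down, so that it ends in row `m'`, and
the zeros of the rows `m + 1, …, m'` each move up one row. These are the rows that meet the rim
hook `A / B`. -/
structure HookRemoval (A B : Partition) (m m' : ℕ) : Prop where
  row_le : m ≤ m'
  zpos_last_lt : zpos B m' < zpos A m'
  zpos_of_lt : ∀ n, n < m → zpos B n = zpos A n
  zpos_of_mem : ∀ n, m ≤ n → n < m' → zpos B n = zpos A (n + 1)
  zpos_of_gt : ∀ n, m' < n → zpos B n = zpos A n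

theorem zpos_injective : Function.Injective zpos := fun A B h => by
  have hparts : A.parts = B.parts := funext fun n => by
    have := congrFun h n
    simp only [zpos] at this
    lia
  cases A
  cases B
  congr

theorem cycleFun_self (m n : ℕ) : cycleFun m m n = n := by
  grind [cycleFun]

theorem StepTrack.eq_or_hookRemoval {f g : ℕ → ℕ} (h : StepTrack A B f g) (hBA : B ≤ A) :
    (A = B ∧ g = f) ∨ ∃ m m', HookRemoval A B m m' ∧ g = fun i => cycleFun m m' (f i) := by
  rcases h with h | ⟨m, m', hle, habove, hinside, hbelow, rfl⟩
  · exact .inl h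
  have hm' : zpos B m' ≤ zpos A m' := by
    have : B.parts m' ≤ A.parts m' := hBA m'
    simp only [zpos]
    lia
  rcases hm'.lt_or_eq with hlt | heq
  · exact .inr ⟨m, m', ⟨hle, hlt, habove, hinside, hbelow⟩, rfl⟩
  have hmm' : m = m' := by
    by_contra hne
    have hpred := hinside (m' - 1) (by lia) (by lia)
    rw [Nat.sub_add_cancel (by lia), ← heq] at hpred
    have := (zpos_strictAnti B).injective hpred
    lia
  subst hmm'
  refine .inl ⟨zpos_injective (funext fun n => ?_), funext fun i => cycleFun_self m (f i)⟩
  rcases lt_trichotomy n m with hn | rfl | hn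
  · exact (habove n hn).symm
  · exact heq.symm
  · exact (hbelow n hn).symm

namespace HookRemoval

theorem zpos_cycleFun (h : HookRemoval A B m m') {n : ℕ} (hn : n ≠ m) :
    zpos B (cycleFun m m' n) = zpos A n := by
  have := h.zpos_of_mem (n - 1)
  grind [cycleFun, h.zpos_of_lt, h.zpos_of_gt]

theorem beadMove (h : HookRemoval A B m m') :
    BeadMove A.zeros B.zeros (zpos A m) (zpos B m') where
  source_mem := ⟨m, rfl⟩
  target_notMem := by
    rintro ⟨n, hn⟩
    have hlt : m' < n := (zpos_strictAnti A).lt_iff_gt.1 (hn ▸ h.zpos_last_lt)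
    exact hlt.ne' ((zpos_strictAnti B).injective ((h.zpos_of_gt n hlt).trans hn))
  eq_insert := by
    have hsurj (n : ℕ) (hn : n ≠ m') : ∃ l ≠ m, cycleFun m m' l = n := by
      have := h.row_le
      by_cases hmem : m ≤ n ∧ n < m'
      · exact ⟨n + 1, by lia, by grind [cycleFun]⟩
      · exact ⟨n, by lia, by grind [cycleFun]⟩
    ext z
    constructor
    · rintro ⟨n, rfl⟩
      by_cases hn : n = m'
      · exact .inl (congrArg _ hn)
      · obtain ⟨l, hl, rfl⟩ := hsurj n hn
        exact .inr ⟨⟨l, (h.zpos_cycleFun hl).symm⟩, h.zpos_cycleFun hl ▸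
          (zpos_strictAnti A).injective.ne hl⟩
    · rintro (rfl | ⟨⟨n, rfl⟩, hn⟩)
      · exact ⟨m', rfl⟩
      · exact ⟨_, h.zpos_cycleFun fun hnm => hn (congrArg _ hnm)⟩

theorem le (h : HookRemoval A B m m') : B ≤ A := fun n => by
  have hzpos : zpos B n ≤ zpos A n := by
    have := zpos_strictAnti A n.lt_add_one
    grind [h.zpos_last_lt, h.zpos_of_lt n, h.zpos_of_mem n, h.zpos_of_gt n]
  simp only [zpos] at hzpos
  lia

theorem target_lt_source (h : HookRemoval A B m m') : zpos B m' < zpos A m :=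
  h.zpos_last_lt.trans_le ((zpos_strictAnti A).antitone h.row_le)

theorem jumpedBeads_zeros (h : HookRemoval A B m m') :
    jumpedBeads A.zeros B.zeros = zpos A '' Set.Ioc m m' := by
  rw [h.beadMove.jumpedBeads_eq]
  ext z
  constructor
  · rintro ⟨⟨n, rfl⟩, hlt, hgt⟩
    refine ⟨n, ⟨(zpos_strictAnti A).lt_iff_gt.1 hgt, ?_⟩, rfl⟩
    by_contra! hn
    exact hlt.not_ge (h.zpos_of_gt n hn ▸ (zpos_strictAnti B).antitone hn.le)
  · rintro ⟨n, ⟨hmn, hnm'⟩, rfl⟩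
    exact ⟨⟨n, rfl⟩, h.zpos_last_lt.trans_le ((zpos_strictAnti A).antitone hnm'),
      zpos_strictAnti A hmn⟩

theorem moveSign_zeros (h : HookRemoval A B m m') :
    moveSign A.zeros B.zeros = (-1) ^ (m' - m) := by
  rw [moveSign, h.jumpedBeads_zeros, Set.ncard_image_of_injective _ (zpos_strictAnti A).injective,
    ← Finset.coe_Ioc, Set.ncard_coe_finset, Nat.card_Ioc]

theorem lt_length (h : HookRemoval A B m m') : m' < A.length := by
  by_contra! hm'
  have := h.zpos_last_lt
  simp only [zpos, parts_eq_zero_of_length_le A hm'] at this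
  lia

end HookRemoval

theorem ncard_skew {s : Finset ℕ} (hs : ∀ n ∉ s, A.parts n ≤ B.parts n) :
    (A.skew B).ncard = ∑ n ∈ s, (A.parts n - B.parts n) := by
  have himage : A.skew B = Equiv.sigmaEquivProd ℕ ℕ ''
      (s.sigma fun n => Finset.Ico (B.parts n) (A.parts n) : Finset (Σ _ : ℕ, ℕ)) := by
    ext ⟨i, j⟩
    have := hs i
    simp only [Partition.skew, Partition.cells, Equiv.image_eq_preimage_symm, Set.mem_sdiff,
      Set.mem_ofPred_eq, Set.mem_preimage, Finset.mem_coe, Finset.mem_sigma, Finset.mem_Ico,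
      Equiv.sigmaEquivProd_symm_apply]
    grind
  rw [himage, Set.ncard_image_of_injective _ (Equiv.injective _), Set.ncard_coe_finset,
    Finset.card_sigma]
  simp

theorem HookRemoval.ncard_skew_eq (h : HookRemoval A B m m') :
    ((A.skew B).ncard : ℤ) = zpos A m - zpos B m' := by
  have hout (n : ℕ) (hn : n ∉ Finset.Ico m (m' + 1)) : A.parts n ≤ B.parts n := by
    have hzpos : zpos A n = zpos B n := by grind [h.zpos_of_lt n, h.zpos_of_gt n]
    simp only [zpos] at hzpos
    lia
  calc ((A.skew B).ncard : ℤ) = ∑ n ∈ Finset.Ico m (m' + 1), (zpos A n - zpos B n) := by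
        rw [ncard_skew hout, Nat.cast_sum]
        refine Finset.sum_congr rfl fun n _ => ?_
        have : B.parts n ≤ A.parts n := h.le n
        simp only [zpos]
        lia
    _ = zpos A m + ∑ n ∈ Finset.Ico m m', zpos A (n + 1) -
          (∑ n ∈ Finset.Ico m m', zpos B n + zpos B m') := by
        rw [Finset.sum_sub_distrib, Finset.sum_eq_sum_Ico_succ_bot (Nat.lt_succ_of_le h.row_le),
          Finset.sum_Ico_succ_top h.row_le, ← Finset.sum_Ico_add' _ m m' 1]
    _ = zpos A m - zpos B m' := by
        rw [Finset.sum_congr rfl fun n hn => h.zpos_of_mem n (Finset.mem_Ico.1 hn).1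
          (Finset.mem_Ico.1 hn).2]
        ring

end HookRemovals

section Steps

variable {A B P : Partition}

theorem IsStep.le {t : ℕ} (h : IsStep A B t) : B ≤ A := by
  rcases h with ⟨-, rfl⟩ | ⟨-, h⟩
  · exact fun _ => le_rfl
  · exact h.1

theorem IsStep.ncard_skew_eq {t : ℕ} (h : IsStep A B t) : (A.skew B).ncard = t := by
  rcases h with ⟨rfl, rfl⟩ | ⟨-, h⟩
  · simp [Partition.skew]
  · exact h.2.2.2.2

theorem StepTrack.eq_or_beadMove {f g : ℕ → ℕ} {t : ℕ} (h : StepTrack A B f g)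
    (hstep : IsStep A B t) :
    A = B ∨ ∃ x y, y < x ∧ BeadMove A.zeros B.zeros x y ∧ x = y + t := by
  rcases h.eq_or_hookRemoval hstep.le with ⟨rfl, -⟩ | ⟨m, m', hrem, -⟩
  · exact .inl rfl
  · refine .inr ⟨_, _, hrem.target_lt_source, hrem.beadMove, ?_⟩
    rw [← hstep.ncard_skew_eq, hrem.ncard_skew_eq]
    ring

theorem RHT.chain_le {κ : List ℕ} (T : RHT P κ) (j : Fin (κ.length + 1)) : T.chain j ≤ P := by
  induction j using Fin.reverseInduction with
  | last => exact fun n => (congrArg (fun A => A.parts n) T.chain_last).le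
  | cast j ih => exact fun n => ((T.step j).le n).trans (ih n)

theorem Partition.length_mono (h : A ≤ P) : A.length ≤ P.length :=
  Nat.sInf_le (Nat.le_zero.1 ((h _).trans (parts_eq_zero_of_length_le P le_rfl).le))

end Steps

section ZeroPermutation

open Equiv.Perm (sign)

theorem cycleFun_cycleIcc {L : ℕ} {a b : Fin L} (hab : a ≤ b) (i : Fin L) :
    cycleFun a b (Fin.cycleIcc a b i) = i := by
  have : NeZero L := ⟨by have := a.isLt; lia⟩
  rcases lt_or_ge i a with hia | hia
  · rw [Fin.cycleIcc_of_lt hia]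
    grind [cycleFun]
  rcases lt_trichotomy i b with hib | rfl | hib
  · rw [Fin.cycleIcc_of_ge_of_lt hia hib]
    have := Fin.val_add_one_of_lt' (i := i) (by lia)
    grind [cycleFun]
  · rw [Fin.cycleIcc_of_last hab]
    simp [cycleFun]
  · rw [Fin.cycleIcc_of_gt hib]
    grind [cycleFun]

theorem StepTrack.exists_perm {A B : Partition} {f g : ℕ → ℕ} (h : StepTrack A B f g)
    (hBA : B ≤ A) {L : ℕ} (hL : A.length ≤ L) :
    ∃ c : Equiv.Perm (Fin L), sign c = moveSign A.zeros B.zeros ∧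
      ∀ (i : ℕ) (r : Fin L), f i = r → g i = c r := by
  rcases h.eq_or_hookRemoval hBA with ⟨rfl, rfl⟩ | ⟨m, m', hrem, rfl⟩
  · exact ⟨1, by rw [moveSign_self, map_one], fun _ _ => id⟩
  have hm' : m' < L := hrem.lt_length.trans_le hL
  let a : Fin L := ⟨m, hrem.row_le.trans_lt hm'⟩
  let b : Fin L := ⟨m', hm'⟩
  have hab : a ≤ b := hrem.row_le
  refine ⟨(Fin.cycleIcc a b).symm, ?_, fun i r hr => ?_⟩
  · rw [Equiv.Perm.sign_symm, Fin.sign_cycleIcc_of_le hab, hrem.moveSign_zeros]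
  · have hcycle := cycleFun_cycleIcc hab ((Fin.cycleIcc a b).symm r)
    rwa [Equiv.apply_symm_apply, ← hr] at hcycle

theorem exists_perm_of_steps {ι : Type*} {n L : ℕ} {q : Fin (n + 1) → ι → ℕ} {s : Fin n → ℤˣ}
    (h : ∀ j, ∃ c : Equiv.Perm (Fin L), sign c = s j ∧
      ∀ (i : ι) (r : Fin L), q j.succ i = r → q j.castSucc i = c r) :
    ∃ c : Equiv.Perm (Fin L), sign c = ∏ j, s j ∧
      ∀ (i : ι) (r : Fin L), q (Fin.last n) i = r → q 0 i = c r := by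
  induction n with
  | zero => exact ⟨1, by simp, fun _ _ => id⟩
  | succ n ih =>
    obtain ⟨c, hc, hcq⟩ := ih (q := fun j => q j.succ) fun j => h j.succ
    obtain ⟨c₀, hc₀, hcq₀⟩ := h 0
    exact ⟨c₀ * c, by rw [map_mul, hc, hc₀, Fin.prod_univ_succ],
      fun i r hr => hcq₀ i (c r) (hcq i r hr)⟩

theorem IsZeroPerm.sign_eq {P : Partition} {κ : List ℕ} {T : RHT P κ}
    {π : Equiv.Perm (Fin P.length)} (hπ : IsZeroPerm T π) :
    sign π = ∏ j : Fin κ.length,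
      moveSign (T.chain j.succ).zeros (T.chain j.castSucc).zeros := by
  obtain ⟨q, hlast, htrack, hzero⟩ := hπ
  obtain ⟨c, hc, hcq⟩ := exists_perm_of_steps fun j => (htrack j).exists_perm (T.step j).le
    (Partition.length_mono (T.chain_le j.succ))
  -- Labels are counted from the bottom row and rows from the top, hence the reversal.
  have hcπ : c * Fin.revPerm * π = Fin.revPerm := by
    ext i
    have hrev (l : Fin P.length) : P.length - 1 - (l : ℕ) = (Fin.rev l : ℕ) := by
      rw [Fin.val_rev]
      lia
    rw [Equiv.Perm.mul_apply, Equiv.Perm.mul_apply, Fin.revPerm_apply, Fin.revPerm_apply,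
      ← hrev, ← hzero i]
    exact (hcq _ _ ((hlast _ (π i).isLt).trans (hrev _))).symm
  have hsign := congrArg sign hcπ
  rw [map_mul, map_mul, mul_right_comm, mul_eq_right] at hsign
  rw [← hc, ← Int.units_inv_eq_self (sign c)]
  exact eq_inv_of_mul_eq_one_right hsign

end ZeroPermutation

section Chains

theorem prod_succ_mul_castSucc {n : ℕ} (f : Fin (n + 1) → ℤˣ) :
    ∏ j : Fin n, f j.succ * f j.castSucc = f (Fin.last n) * f 0 := by
  induction n with
  | zero => exact (Int.units_mul_self (f 0)).symm
  | succ n ih =>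
    rw [Fin.prod_univ_castSucc]
    simp only [Fin.succ_castSucc, ih fun j => f j.castSucc]
    rw [Fin.succ_last, Fin.castSucc_zero, mul_comm, mul_assoc, ← mul_assoc _ _ (f 0),
      Int.units_mul_self, one_mul]

variable {α M : Type*} {n r : ℕ} {C : Fin (n + 1) → α} {D : Fin (r + 1) → α} {e : Fin r → Fin n}

theorem eq_of_castSucc_eq_succ {u v : Fin (n + 1)} (huv : u ≤ v)
    (h : ∀ j : Fin n, u ≤ j.castSucc → j.castSucc < v → C j.castSucc = C j.succ) : C u = C v := by
  induction v using Fin.induction with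
  | zero => rw [Fin.le_zero_iff.1 huv]
  | succ j ih =>
    rcases huv.eq_or_lt with rfl | hlt
    · rfl
    have hle : u ≤ j.castSucc := Fin.le_castSucc_iff.2 hlt
    exact (ih hle fun l hul hlj => h l hul (hlj.trans j.castSucc_lt_succ)).trans
      (h j hle j.castSucc_lt_succ)

theorem subchain_castSucc (he : StrictMono e)
    (hC : ∀ j ∉ Set.range e, C j.castSucc = C j.succ) (h₀ : D 0 = C 0)
    (hD : ∀ s, D s.succ = C (e s).succ) (s : Fin r) : D s.castSucc = C (e s).castSucc := by
  have hgap {u : Fin (n + 1)} (hu : u ≤ (e s).castSucc)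
      (hmem : ∀ l < s, (e l).castSucc < u) : C u = C (e s).castSucc := by
    refine eq_of_castSucc_eq_succ hu fun j huj hj => hC j ?_
    rintro ⟨l, rfl⟩
    exact (hmem l (he.lt_iff_lt.1 hj)).not_ge huj
  rcases Fin.eq_zero_or_eq_succ s.castSucc with hs | ⟨l, hl⟩
  · rw [hs, h₀]
    refine hgap (Fin.zero_le _) fun l hls => ?_
    exact absurd (hs ▸ Fin.castSucc_lt_castSucc_iff.2 hls) (Fin.not_lt_zero _)
  · rw [hl, hD]
    have hls : l < s := Fin.castSucc_lt_castSucc_iff.1 (hl ▸ l.castSucc_lt_succ)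
    refine hgap (Fin.succ_le_castSucc_iff.2 (he hls)) fun l' hl' => ?_
    have hle : l' ≤ l := Fin.castSucc_lt_succ_iff.1 (hl ▸ Fin.castSucc_lt_castSucc_iff.2 hl')
    exact Fin.castSucc_lt_succ_iff.2 (he.monotone hle)

theorem prod_subchain [CommMonoid M] {w : α → α → M} (hw : ∀ c, w c c = 1) (he : StrictMono e)
    (hC : ∀ j ∉ Set.range e, C j.castSucc = C j.succ) (h₀ : D 0 = C 0)
    (hD : ∀ s, D s.succ = C (e s).succ) :
    ∏ s : Fin r, w (D s.succ) (D s.castSucc) = ∏ j : Fin n, w (C j.succ) (C j.castSucc) := by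
  refine Finset.prod_of_injOn e he.injective.injOn (fun s _ => Finset.mem_univ _) ?_ ?_
  · intro j _ hj
    rw [hC j (by simpa using hj), hw]
  · intro s _
    rw [hD, subchain_castSucc he hC h₀ hD]

end Chains

section SignDecomposition

open Equiv.Perm (sign)

variable {k : ℕ} [NeZero k] {A B P : Partition} {κ : List ℕ} {T : RHT P κ}
  {π : Equiv.Perm (Fin P.length)}

/-- The sign of the permutation that sorts the `L` rightmost zeros of `s(P)` by their residues
modulo `k`, i.e. that separates the subsequences from which the `k`-quotient is read off. -/
def residueSign (k : ℕ) [NeZero k] (L : ℕ) (P : Partition) : ℤˣ :=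
  sortSign (residue k) (P.topZeros L)

theorem BeadMove.moveSign_zeros_eq_residueSign_mul {x y : ℤ} (h : BeadMove A.zeros B.zeros x y)
    (hyx : y < x) (hxy : residue k x = residue k y) {L : ℕ} (hA : A.length ≤ L)
    (hB : B.length ≤ L) :
    moveSign A.zeros B.zeros = residueSign k L A * residueSign k L B *
      ∏ i : Fin k, moveSign (runner i A.zeros) (runner i B.zeros) := by
  rw [prod_moveSign_runner h hxy]
  exact h.moveSign_eq_sortSign_mul hyx hxy (neg_le_of_notMem_zeros hA h.target_notMem)
    (coe_topZeros hA) (coe_topZeros hB)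

theorem IsKQuotient.moveSign_zeros_eq {QA QB : Fin k → Partition} (hA : IsKQuotient k A QA)
    (hB : IsKQuotient k B QB)
    (hAB : A = B ∨ ∃ x y, residue k x = residue k y ∧ BeadMove A.zeros B.zeros x y) (i : Fin k) :
    moveSign (QA i).zeros (QB i).zeros = moveSign (runner i A.zeros) (runner i B.zeros) := by
  obtain ⟨a, ha⟩ := hA i
  obtain ⟨b, hb⟩ := hB i
  refine moveSign_zeros_eq_of_preimage ?_ (Set.ext ha) (Set.ext hb)
  rcases hAB with rfl | ⟨x, y, hxy, hmove⟩
  · exact .inl rfl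
  · exact runner_eq_or_beadMove hmove hxy i

theorem IsZeroPerm.eq_or_beadMove (hπ : IsZeroPerm T π) (j : Fin κ.length) :
    T.chain j.succ = T.chain j.castSucc ∨ ∃ x y, y < x ∧
      BeadMove (T.chain j.succ).zeros (T.chain j.castSucc).zeros x y ∧ x = y + κ.get j := by
  obtain ⟨q, -, htrack, -⟩ := hπ
  exact (htrack j).eq_or_beadMove (T.step j)

theorem IsZeroPerm.sign_eq_residueSign_mul (hπ : IsZeroPerm T π) (hκ : ∀ j, k ∣ κ.get j) :
    sign π = residueSign k P.length P * residueSign k P.length Partition.empty *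
      ∏ j : Fin κ.length, ∏ i : Fin k,
        moveSign (runner i (T.chain j.succ).zeros) (runner i (T.chain j.castSucc).zeros) := by
  have htelescope := prod_succ_mul_castSucc fun j => residueSign k P.length (T.chain j)
  rw [T.chain_last, T.chain_zero] at htelescope
  rw [hπ.sign_eq, ← htelescope, ← Finset.prod_mul_distrib]
  refine Finset.prod_congr rfl fun j _ => ?_
  rcases hπ.eq_or_beadMove j with hj | ⟨x, y, hyx, hmove, rfl⟩
  · simp [hj, moveSign_self, Int.units_mul_self]
  · exact hmove.moveSign_zeros_eq_residueSign_mul hyx (residue_add_of_dvd (hκ j) y)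
      (Partition.length_mono (T.chain_le _)) (Partition.length_mono (T.chain_le _))

theorem IsZeroPerm.sign_eq_residueSign_of_replicate {p : ℕ} {T : RHT P (List.replicate p k)}
    (hπ : IsZeroPerm T π) :
    sign π = residueSign k P.length P * residueSign k P.length Partition.empty := by
  have hget (j : Fin (List.replicate p k).length) : (List.replicate p k).get j = k := by simp
  rw [hπ.sign_eq_residueSign_mul fun j => (hget j).symm.dvd, mul_eq_left]
  refine Finset.prod_eq_one fun j _ => ?_
  rcases hπ.eq_or_beadMove j with hj | ⟨x, y, -, hmove, rfl⟩
  · simp [hj, moveSign_self]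
  · rw [prod_moveSign_runner hmove (residue_add_of_dvd (hget j).symm.dvd y), hget, Set.inter_assoc,
      Ioo_inter_residue_eq_empty, Set.inter_empty, Set.ncard_empty, pow_zero]

theorem IsZeroPerm.sign_eq_residueSign_mul_quotient (hπ : IsZeroPerm T π)
    (hκ : ∀ j, k ∣ κ.get j) {Q : Fin (κ.length + 1) → Fin k → Partition}
    (hQ : ∀ j, IsKQuotient k (T.chain j) (Q j)) :
    sign π = residueSign k P.length P * residueSign k P.length Partition.empty *
      ∏ i : Fin k, ∏ j : Fin κ.length,
        moveSign (Q j.succ i).zeros (Q j.castSucc i).zeros := by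
  rw [hπ.sign_eq_residueSign_mul hκ, Finset.prod_comm]
  refine congrArg _ (Finset.prod_congr rfl fun i _ => Finset.prod_congr rfl fun j _ => ?_)
  refine ((hQ _).moveSign_zeros_eq (hQ _) ?_ i).symm
  refine (hπ.eq_or_beadMove j).imp_right fun ⟨x, y, _, hmove, hxy⟩ => ⟨x, y, ?_, hmove⟩
  rw [hxy, residue_add_of_dvd (hκ j)]

theorem sign_decomposition_general {k : ℕ} [NeZero k] {P : Partition} {κ : List ℕ}
    {Q : Fin k → Partition} {ν : Fin k → List ℕ} {T : RHT P κ} {Ti : ∀ i, RHT (Q i) (ν i)}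
    (hω : OmegaRel k T Ti) {πT : Equiv.Perm (Fin P.length)} (hπT : IsZeroPerm T πT)
    {p : ℕ} {T₀ : RHT P (List.replicate p k)} {πlam : Equiv.Perm (Fin P.length)}
    (hπlam : IsZeroPerm T₀ πlam) {πi : ∀ i, Equiv.Perm (Fin (Q i).length)}
    (hπi : ∀ i, IsZeroPerm (Ti i) (πi i)) :
    sign πT = sign πlam * ∏ i, sign (πi i) := by
  obtain ⟨QC, a, hQC, hstay, hstep, hsub⟩ := hω
  have hκ (j : Fin κ.length) : k ∣ κ.get j := (hstep j).imp fun _ => And.left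
  rw [hπT.sign_eq_residueSign_mul_quotient hκ hQC, hπlam.sign_eq_residueSign_of_replicate]
  refine congrArg _ (Finset.prod_congr rfl fun i _ => ?_)
  obtain ⟨e, he, -, hsurj, -, h₀, hsucc⟩ := hsub i
  rw [(hπi i).sign_eq]
  exact (prod_subchain (C := fun j => QC j i) (w := fun A B => moveSign A.zeros B.zeros)
    (fun A => moveSign_self A.zeros) he
    (fun j hj => hstay j i fun hi => hj (hsurj j hi.symm)) h₀ hsucc).symm

end SignDecomposition

/-- Sign Decomposition Theorem: let `λ` have empty `k`-core,
let `μ` be a partition of `p = |λ|/k`, and `T ∈ RHT_{kμ}^λ`. If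
`ω_{kμ}^λ(T) = (T₁,…,T_k)` then
`sign(π_T) = sign(π_λ) · sign(π_{T₁}) ⋯ sign(π_{T_k})`. -/
theorem sign_decomposition (k p : ℕ) (hk : 2 ≤ k) (P : Partition)
    (hcore : IsKCore k P Partition.empty) (hp : P.size = k * p)
    (μ : List ℕ) (hμsort : μ.Pairwise (· ≥ ·)) (hμpos : ∀ x ∈ μ, 0 < x)
    (hμsum : μ.sum = p)
    (Q : Fin k → Partition) (hQ : IsKQuotient k P Q) (ν : Fin k → List ℕ)
    (T : RHT P (μ.map fun x => k * x)) (Ti : ∀ i : Fin k, RHT (Q i) (ν i))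
    (hω : OmegaRel k T Ti)
    (πT : Equiv.Perm (Fin P.length)) (hπT : IsZeroPerm T πT)
    (T₀ : RHT P (List.replicate p k)) (πlam : Equiv.Perm (Fin P.length))
    (hπlam : IsZeroPerm T₀ πlam)
    (πi : ∀ i : Fin k, Equiv.Perm (Fin (Q i).length))
    (hπi : ∀ i : Fin k, IsZeroPerm (Ti i) (πi i)) :
    Equiv.Perm.sign πT =
      Equiv.Perm.sign πlam * ∏ i : Fin k, Equiv.Perm.sign (πi i) := by
  have : NeZero k := ⟨by lia⟩
  exact sign_decomposition_general hω hπT hπlam hπi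

end RimHookPaper
end

section
/- Let k ≥ 2 and let λ be a partition with k | |λ|, p := |λ|/k. If RHT_{kμ}^λ ≠ ∅ for some weak composition μ of p, then RHT_{(k^p)}^λ ≠ ∅, i.e., there is a rim hook tableau of shape λ all of whose rim hooks have length exactly k. -/
open scoped BigOperators

namespace RimHookPaper

/-!
Read a partition as its 0/1 sequence. Removing a rim hook of length `n` moves one zero to an empty
place `n` positions further left, and every such move removes a rim hook. A move from `x` to `y`
can be interrupted at any intermediate position `w`: if `w` is empty, stop there; if `w` is
occupied, first move the zero at `w` to `y` and then the one at `x` to `w`. Hence a rim hook of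
length `k * t` is a succession of `t` rim hooks of length `k`.
-/

open Relation

theorem Adj.symm {c d : ℕ × ℕ} (h : Adj c d) : Adj d c := by
  unfold Adj at *
  lia

/-- Adjacency of cells within `S`, the relation whose paths connect `S` in `IsConnectedSet`. -/
def AdjIn (S : Set (ℕ × ℕ)) (c d : ℕ × ℕ) : Prop := c ∈ S ∧ d ∈ S ∧ Adj c d

instance (S : Set (ℕ × ℕ)) : Std.Symm (AdjIn S) where
  symm _ _ h := ⟨h.2.1, h.1, h.2.2.symm⟩

theorem exists_mem_of_reflTransGen_adjIn {S : Set (ℕ × ℕ)} {c d : ℕ × ℕ} {i : ℕ}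
    (h : ReflTransGen (AdjIn S) c d) (hc : c.1 ≤ i) (hd : i < d.1) :
    ∃ j, (i, j) ∈ S ∧ (i + 1, j) ∈ S := by
  induction h with
  | refl => lia
  | @tail x y _ hxy ih =>
    obtain hx | hx := lt_or_ge i x.1
    · exact ih hx
    · obtain ⟨⟨a, j⟩, b, l⟩ := x, y
      obtain ⟨hxS, hyS, hadj⟩ := hxy
      obtain ⟨rfl, rfl, rfl⟩ : a = i ∧ b = i + 1 ∧ l = j := by
        simp only [Adj] at *
        lia
      exact ⟨_, hxS, hyS⟩

namespace Partition

variable {P Q : Partition}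

theorem zpos_strictAnti (P : Partition) : StrictAnti (zpos P) := by
  intro i j hij
  have := P.antitone hij.le
  unfold zpos
  lia

theorem zpos_injective : Function.Injective zpos := by
  rintro ⟨p, _, _⟩ ⟨q, _, _⟩ h
  obtain rfl : p = q := funext fun i => by simpa [zpos] using congrFun h i
  rfl

theorem exists_zpos_eq {z : ℕ → ℤ} (hz : StrictAnti z) {N : ℕ} (hN : ∀ i, N ≤ i → z i = -i - 1) :
    ∃ Q : Partition, zpos Q = z := by
  have anti : Antitone fun i : ℕ => z i + i + 1 := antitone_nat_of_succ_le fun i => by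
    have := hz (Nat.lt_add_one i)
    push_cast
    lia
  have nonneg (i : ℕ) : 0 ≤ z i + i + 1 := by
    have := anti (Nat.le_add_right i N)
    have := hN (i + N) (by lia)
    push_cast at *
    lia
  refine ⟨⟨fun i => (z i + i + 1).toNat, fun i j hij => Int.toNat_le_toNat (anti hij),
    N, fun i hi => ?_⟩, funext fun i => ?_⟩
  · rw [hN i hi]
    lia
  · have := nonneg i
    simp only [zpos]
    lia

/-- The positions of the zeros in the 0/1 sequence `s(P)`. -/
def zeros_s10 (P : Partition) : Set ℤ := Set.range (zpos P)

theorem zeros_injective : Function.Injective zeros_s10 := by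
  intro P Q h
  have h' : Set.range (OrderDual.toDual ∘ zpos P) = Set.range (OrderDual.toDual ∘ zpos Q) := by
    rw [Set.range_comp, Set.range_comp]
    exact congrArg (OrderDual.toDual '' ·) h
  exact zpos_injective <|
    (StrictMono.range_inj P.zpos_strictAnti.dual_right Q.zpos_strictAnti.dual_right).1 h'

theorem mk_mem_skew {i j : ℕ} : (i, j) ∈ P.skew Q ↔ Q.parts i ≤ j ∧ j < P.parts i := by
  simp [skew, cells, and_comm]

theorem ncard_skew {s : Finset ℕ} (hs : ∀ i ∉ s, P.parts i ≤ Q.parts i) :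
    (P.skew Q).ncard = ∑ i ∈ s, (P.parts i - Q.parts i) := by
  have : P.skew Q = ((s.sigma fun i => Finset.Ico (Q.parts i) (P.parts i)).map
      (Equiv.sigmaEquivProd ℕ ℕ).toEmbedding : Finset (ℕ × ℕ)) := by
    ext ⟨i, j⟩
    have hi : Q.parts i ≤ j ∧ j < P.parts i → i ∈ s := fun h => by
      by_contra hi
      have := hs i hi
      lia
    simpa [mk_mem_skew] using hi
  rw [this, Set.ncard_coe_finset]
  simp

theorem noSquare_skew_iff : NoSquare (P.skew Q) ↔ ∀ i, P.parts (i + 1) ≤ Q.parts i + 1 := by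
  simp only [NoSquare, mk_mem_skew]
  constructor
  · intro h i
    by_contra hi
    have hP := P.antitone (Nat.le_add_right i 1)
    have hQ := Q.antitone (Nat.le_add_right i 1)
    exact h ⟨i, Q.parts i, by lia⟩
  · rintro h ⟨i, j, hij⟩
    have := h i
    lia

theorem reflTransGen_adjIn_row {i j l : ℕ} (hj : (i, j) ∈ P.skew Q) (hl : (i, l) ∈ P.skew Q) :
    ReflTransGen (AdjIn (P.skew Q)) (i, j) (i, l) := by
  rw [mk_mem_skew] at hj hl
  have path : ReflTransGen (fun a b => AdjIn (P.skew Q) (i, a) (i, b)) j l := by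
    refine reflTransGen_of_succ _ (fun a ha => ?_) fun a ha => ?_ <;>
    · rw [Set.mem_Ico] at ha
      simp only [AdjIn, mk_mem_skew, Adj, Nat.succ_eq_succ, Nat.succ_eq_add_one]
      lia
  exact path.lift (Prod.mk i) fun _ _ h => h

theorem reflTransGen_adjIn_succ {i j l : ℕ} (h : Q.parts i < P.parts (i + 1))
    (hj : (i, j) ∈ P.skew Q) (hl : (i + 1, l) ∈ P.skew Q) :
    ReflTransGen (AdjIn (P.skew Q)) (i, j) (i + 1, l) := by
  have hP := P.antitone (Nat.le_add_right i 1)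
  have hQ := Q.antitone (Nat.le_add_right i 1)
  have above : (i, Q.parts i) ∈ P.skew Q := mk_mem_skew.2 (by lia)
  have below : (i + 1, Q.parts i) ∈ P.skew Q := mk_mem_skew.2 (by lia)
  have hadj : Adj (i, Q.parts i) (i + 1, Q.parts i) := by simp [Adj]
  exact ((reflTransGen_adjIn_row hj above).tail ⟨above, below, hadj⟩).trans
    (reflTransGen_adjIn_row below hl)

theorem reflTransGen_adjIn_of_le {a b j l : ℕ} (hab : a ≤ b)
    (h : ∀ i, a ≤ i → i < b → Q.parts i < P.parts (i + 1))
    (hj : (a, j) ∈ P.skew Q) (hl : (b, l) ∈ P.skew Q) :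
    ReflTransGen (AdjIn (P.skew Q)) (a, j) (b, l) := by
  induction b, hab using Nat.le_induction generalizing l with
  | base => exact reflTransGen_adjIn_row hj hl
  | succ b hab ih =>
    have hlink := h b hab (Nat.lt_add_one b)
    have hb : (b, Q.parts b) ∈ P.skew Q :=
      mk_mem_skew.2 ⟨le_rfl, hlink.trans_le (P.antitone (Nat.le_add_right b 1))⟩
    exact (ih (fun i hai hib => h i hai (by lia)) hb).trans (reflTransGen_adjIn_succ hlink hb hl)

theorem isConnectedSet_skew_iff :
    IsConnectedSet (P.skew Q) ↔ ∀ a b, Q.parts a < P.parts a → Q.parts b < P.parts b →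
      ∀ i, a ≤ i → i < b → Q.parts i < P.parts (i + 1) := by
  constructor
  · intro h a b ha hb i hai hib
    obtain ⟨j, hj, hj'⟩ := exists_mem_of_reflTransGen_adjIn
      (h (a, Q.parts a) (mk_mem_skew.2 ⟨le_rfl, ha⟩) (b, Q.parts b) (mk_mem_skew.2 ⟨le_rfl, hb⟩))
      hai hib
    exact (mk_mem_skew.1 hj).1.trans_lt (mk_mem_skew.1 hj').2
  · rintro h ⟨a, j⟩ hj ⟨b, l⟩ hl
    change ReflTransGen (AdjIn (P.skew Q)) (a, j) (b, l)
    have row {i j : ℕ} (hij : (i, j) ∈ P.skew Q) : Q.parts i < P.parts i :=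
      (mk_mem_skew.1 hij).1.trans_lt (mk_mem_skew.1 hij).2
    obtain hab | hba := le_total a b
    · exact reflTransGen_adjIn_of_le hab (h a b (row hj) (row hl)) hj hl
    · exact symm (reflTransGen_adjIn_of_le hba (h b a (row hl) (row hj)) hl hj)

end Partition

/-- `Q` arises from `P` by letting the zero in row `m` jump left into row `m'`, the zeros in rows
`m + 1, …, m'` each moving up one row, as in `StepTrack`. This is the row-by-row description of the
removal of a rim hook occupying the rows `m, …, m'`. -/
structure IsRowJump (P Q : Partition) (m m' : ℕ) : Prop where
  le : m ≤ m'
  zpos_of_lt : ∀ i, i < m → zpos Q i = zpos P i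
  zpos_of_mem_Ico : ∀ i, m ≤ i → i < m' → zpos Q i = zpos P (i + 1)
  zpos_of_gt : ∀ i, m' < i → zpos Q i = zpos P i
  zpos_lt : zpos Q m' < zpos P m'

namespace IsRowJump

variable {P Q : Partition} {m m' : ℕ}

theorem parts_lt_iff (h : IsRowJump P Q m m') {i : ℕ} :
    Q.parts i < P.parts i ↔ m ≤ i ∧ i ≤ m' := by
  have hlt := h.zpos_of_lt i
  have hmid := h.zpos_of_mem_Ico i
  have hgt := h.zpos_of_gt i
  have hend := h.zpos_lt
  have hP := P.antitone (Nat.le_add_right i 1)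
  obtain rfl | hi := eq_or_ne i m'
  · have := h.le
    unfold zpos at *
    lia
  · unfold zpos at *
    lia

theorem parts_le (h : IsRowJump P Q m m') (i : ℕ) : Q.parts i ≤ P.parts i := by
  have hlt := h.zpos_of_lt i
  have hgt := h.zpos_of_gt i
  have hiff := h.parts_lt_iff (i := i)
  unfold zpos at hlt hgt
  lia

theorem ncard_skew (h : IsRowJump P Q m m') :
    ((P.skew Q).ncard : ℤ) = zpos P m - zpos Q m' := by
  have hout : ∀ i ∉ Finset.Ico m (m' + 1), P.parts i ≤ Q.parts i := fun i hi => by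
    rw [Finset.mem_Ico] at hi
    have := h.parts_lt_iff (i := i)
    lia
  calc ((P.skew Q).ncard : ℤ)
      = ∑ i ∈ Finset.Ico m (m' + 1), (zpos P i - zpos Q i) := by
        rw [Partition.ncard_skew hout, Nat.cast_sum]
        refine Finset.sum_congr rfl fun i _ => ?_
        rw [Nat.cast_sub (h.parts_le i)]
        unfold zpos
        ring
    _ = ∑ i ∈ Finset.Ico m m', (zpos P i - zpos P (i + 1)) + (zpos P m' - zpos Q m') := by
        rw [Finset.sum_Ico_succ_top h.le]
        congr 1
        refine Finset.sum_congr rfl fun i hi => ?_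
        rw [Finset.mem_Ico] at hi
        rw [h.zpos_of_mem_Ico i hi.1 hi.2]
    _ = zpos P m - zpos Q m' := by
        have := Finset.sum_Ico_sub (fun i => -zpos P i) h.le
        simp only [neg_sub_neg] at this
        rw [this]
        ring

theorem isRimHook (h : IsRowJump P Q m m') : IsRimHook P Q (P.skew Q).ncard := by
  refine ⟨h.parts_le, ⟨(m, Q.parts m), ?_⟩, Partition.isConnectedSet_skew_iff.2 ?_,
    Partition.noSquare_skew_iff.2 ?_, rfl⟩
  · exact Partition.mk_mem_skew.2 ⟨le_rfl, h.parts_lt_iff.2 ⟨le_rfl, h.le⟩⟩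
  · intro a b ha hb i hai hib
    rw [h.parts_lt_iff] at ha hb
    have := h.zpos_of_mem_Ico i (by lia) (by lia)
    unfold zpos at this
    lia
  · intro i
    have hlt := h.zpos_of_lt i
    have hmid := h.zpos_of_mem_Ico i
    have hgt := h.zpos_of_gt (i + 1)
    have hP := P.antitone (Nat.le_add_right i 1)
    have hQ := Q.antitone (Nat.le_add_right i 1)
    unfold zpos at hlt hmid hgt
    lia

end IsRowJump

theorem IsRimHook.exists_isRowJump {P Q : Partition} {n : ℕ} (h : IsRimHook P Q n) :
    ∃ m m', IsRowJump P Q m m' := by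
  obtain ⟨hle, ⟨⟨r, c⟩, hrc⟩, hconn, hsq, -⟩ := h
  rw [Partition.isConnectedSet_skew_iff] at hconn
  rw [Partition.noSquare_skew_iff] at hsq
  set rows : Set ℕ := {i | Q.parts i < P.parts i}
  have hne : rows.Nonempty := ⟨r, by rw [Partition.mk_mem_skew] at hrc; exact hrc.1.trans_lt hrc.2⟩
  have hbdd : BddAbove rows := by
    obtain ⟨N, hN⟩ := P.eventually_zero
    refine ⟨N, fun i hi => ?_⟩
    by_contra hlt
    exact Nat.not_lt_zero _ (hi.trans_eq (hN i (not_le.1 hlt).le))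
  have heq {i : ℕ} (hi : i ∉ rows) : zpos Q i = zpos P i := by
    rw [zpos, zpos, (hle i).antisymm (not_lt.1 hi)]
  obtain ⟨m, hm, hmin⟩ := (OrderBot.bddBelow rows).exists_isLeast_of_nonempty hne
  obtain ⟨m', hm', hmax⟩ := hbdd.exists_isGreatest_of_nonempty hne
  refine ⟨m, m', hmin hm', fun i hi => heq fun hmem => ?_, fun i hmi him => ?_,
    fun i hi => heq fun hmem => ?_, ?_⟩
  · exact (hmin hmem).not_gt hi
  · have := hconn m m' hm hm' i hmi him
    have := hsq i
    unfold zpos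
    lia
  · exact (hmax hmem).not_gt hi
  · have : Q.parts m' < P.parts m' := hm'
    unfold zpos
    lia

theorem isRimHook_iff_exists_isRowJump {P Q : Partition} {n : ℕ} :
    IsRimHook P Q n ↔ ∃ m m', IsRowJump P Q m m' ∧ zpos P m - zpos Q m' = n := by
  constructor
  · intro h
    obtain ⟨m, m', hjump⟩ := h.exists_isRowJump
    exact ⟨m, m', hjump, by rw [← hjump.ncard_skew, h.2.2.2.2]⟩
  · rintro ⟨m, m', hjump, hn⟩
    obtain rfl : (P.skew Q).ncard = n := by exact_mod_cast hjump.ncard_skew.trans hn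
    exact hjump.isRimHook

/-- `Q` arises from `P` by moving the zero at position `x` of `s(P)` left to the unoccupied
position `y`. This describes the removal of a rim hook of length `x - y` on the 0/1 sequence. -/
structure IsZeroJump (P Q : Partition) (x y : ℤ) : Prop where
  lt : y < x
  mem : x ∈ P.zeros_s10
  notMem : y ∉ P.zeros_s10
  zeros_eq : Q.zeros_s10 = insert y (P.zeros_s10 \ {x})

theorem IsRowJump.image_zpos_compl {P Q : Partition} {m m' : ℕ} (h : IsRowJump P Q m m') :
    zpos Q '' {m'}ᶜ = zpos P '' {m}ᶜ := by
  ext y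
  simp only [Set.mem_image, Set.mem_compl_singleton_iff]
  constructor
  · rintro ⟨i, hi, rfl⟩
    obtain hm | hm := lt_or_ge i m
    · exact ⟨i, hm.ne, (h.zpos_of_lt i hm).symm⟩
    obtain hm' | hm' := hi.lt_or_gt
    · exact ⟨i + 1, by lia, (h.zpos_of_mem_Ico i hm hm').symm⟩
    · exact ⟨i, by have := h.le; lia, (h.zpos_of_gt i hm').symm⟩
  · rintro ⟨i, hi, rfl⟩
    obtain hm | hm := hi.lt_or_gt
    · exact ⟨i, by have := h.le; lia, h.zpos_of_lt i hm⟩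
    obtain hm' | hm' := le_or_gt i m'
    · obtain ⟨i, rfl⟩ := Nat.exists_eq_add_of_lt hm
      exact ⟨m + i, by lia, h.zpos_of_mem_Ico _ (by lia) (by lia)⟩
    · exact ⟨i, hm'.ne', h.zpos_of_gt i hm'⟩

theorem IsRowJump.isZeroJump {P Q : Partition} {m m' : ℕ} (h : IsRowJump P Q m m') :
    IsZeroJump P Q (zpos P m) (zpos Q m') := by
  have diff (R : Partition) (i : ℕ) : R.zeros_s10 \ {zpos R i} = zpos R '' {i}ᶜ := by
    rw [Set.image_compl_eq_range_sdiff_image R.zpos_strictAnti.injective, Set.image_singleton,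
      Partition.zeros_s10]
  have hmem (R : Partition) (i : ℕ) : zpos R i ∈ R.zeros_s10 := ⟨i, rfl⟩
  have hlt : zpos Q m' < zpos P m := h.zpos_lt.trans_le (P.zpos_strictAnti.antitone h.le)
  have hdiff : P.zeros_s10 \ {zpos P m} = Q.zeros_s10 \ {zpos Q m'} := by
    rw [diff, diff, h.image_zpos_compl]
  refine ⟨hlt, hmem P m, fun hP => ?_, ?_⟩
  · have : zpos Q m' ∈ P.zeros_s10 \ {zpos P m} := ⟨hP, hlt.ne⟩
    simp [hdiff] at this
  · rw [hdiff, Set.insert_sdiff_self_of_mem (hmem Q m')]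

theorem exists_zpos_succ_lt_lt_zpos {P : Partition} {x y : ℤ} (hx : x ∈ P.zeros_s10)
    (hy : y ∉ P.zeros_s10) (hyx : y < x) : ∃ m, zpos P (m + 1) < y ∧ y < zpos P m := by
  obtain ⟨i, rfl⟩ := hx
  have hzero : ¬ zpos P 0 < y := by
    have := P.zpos_strictAnti.antitone (Nat.zero_le i)
    lia
  have hex : ∃ j, zpos P j < y := by
    obtain ⟨N, hN⟩ := P.eventually_zero
    refine ⟨N + y.natAbs, ?_⟩
    rw [zpos, hN _ (Nat.le_add_right ..)]
    lia
  obtain ⟨m, hm, hm_succ⟩ := Nat.exists_not_and_succ_of_not_zero_of_exists hzero hex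
  exact ⟨m, hm_succ, (not_lt.1 hm).lt_of_ne fun h => hy ⟨m, h.symm⟩⟩

theorem exists_isRowJump {P : Partition} {x y : ℤ} (hyx : y < x) (hx : x ∈ P.zeros_s10)
    (hy : y ∉ P.zeros_s10) : ∃ Q m m', IsRowJump P Q m m' ∧ zpos P m = x ∧ zpos Q m' = y := by
  obtain ⟨m', hlt, hgt⟩ := exists_zpos_succ_lt_lt_zpos hx hy hyx
  obtain ⟨m, rfl⟩ := hx
  have hle : m ≤ m' := Nat.lt_add_one_iff.1 (P.zpos_strictAnti.lt_iff_gt.1 (hlt.trans hyx))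
  let z (i : ℕ) : ℤ :=
    if i < m then zpos P i else if i < m' then zpos P (i + 1) else if i = m' then y else zpos P i
  have anti : StrictAnti z := strictAnti_nat_of_succ_lt fun i => by
    have h₁ := P.zpos_strictAnti (Nat.lt_add_one i)
    have h₂ := P.zpos_strictAnti (Nat.lt_add_one (i + 1))
    grind
  obtain ⟨N, hN⟩ := P.eventually_zero
  obtain ⟨Q, hQ⟩ := Partition.exists_zpos_eq (N := N + m' + 1) anti fun i hi => by
    have : z i = zpos P i := by grind
    rw [this, zpos, hN i (by lia)]
    lia
  refine ⟨Q, m, m', ?_, rfl, by grind⟩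
  constructor <;> grind

theorem IsZeroJump.right_unique {P Q Q' : Partition} {x y : ℤ} (h : IsZeroJump P Q x y)
    (h' : IsZeroJump P Q' x y) : Q = Q' :=
  Partition.zeros_injective (h.zeros_eq.trans h'.zeros_eq.symm)

theorem exists_isZeroJump {P : Partition} {x y : ℤ} (hyx : y < x) (hx : x ∈ P.zeros_s10)
    (hy : y ∉ P.zeros_s10) : ∃ Q, IsZeroJump P Q x y := by
  obtain ⟨Q, m, m', hjump, rfl, rfl⟩ := exists_isRowJump hyx hx hy
  exact ⟨Q, hjump.isZeroJump⟩

theorem isRimHook_iff_exists_isZeroJump {P Q : Partition} {n : ℕ} :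
    IsRimHook P Q n ↔ ∃ x y, IsZeroJump P Q x y ∧ x - y = n := by
  rw [isRimHook_iff_exists_isRowJump]
  constructor
  · rintro ⟨m, m', hjump, hn⟩
    exact ⟨_, _, hjump.isZeroJump, hn⟩
  · rintro ⟨x, y, hjump, hn⟩
    obtain ⟨Q', m, m', hrow, rfl, rfl⟩ := exists_isRowJump hjump.lt hjump.mem hjump.notMem
    obtain rfl := hjump.right_unique hrow.isZeroJump
    exact ⟨m, m', hrow, hn⟩

theorem IsZeroJump.exists_between {P Q : Partition} {x w y : ℤ} (h : IsZeroJump P Q x y)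
    (hyw : y < w) (hwx : w < x) :
    ∃ R, IsZeroJump P R x w ∧ IsZeroJump R Q w y ∨ IsZeroJump P R w y ∧ IsZeroJump R Q x w := by
  obtain ⟨-, hx, hy, hQ⟩ := h
  by_cases hw : w ∈ P.zeros_s10
  · obtain ⟨R, hR⟩ := exists_isZeroJump hyw hw hy
    refine ⟨R, .inr ⟨hR, hwx, ?_, ?_, ?_⟩⟩ <;> grind [hR.zeros_eq]
  · obtain ⟨R, hR⟩ := exists_isZeroJump hwx hx hw
    refine ⟨R, .inl ⟨hR, hyw, ?_, ?_, ?_⟩⟩ <;> grind [hR.zeros_eq]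

theorem IsRimHook.exists_split {P Q : Partition} {a b : ℕ} (ha : 0 < a) (hb : 0 < b)
    (h : IsRimHook P Q (a + b)) :
    ∃ R, IsRimHook P R a ∧ IsRimHook R Q b ∨ IsRimHook P R b ∧ IsRimHook R Q a := by
  simp only [isRimHook_iff_exists_isZeroJump] at h ⊢
  obtain ⟨x, y, hjump, hxy⟩ := h
  push_cast at hxy
  obtain ⟨R, ⟨hPR, hRQ⟩ | ⟨hPR, hRQ⟩⟩ := hjump.exists_between (w := x - a) (by lia) (by lia)
  · exact ⟨R, .inl ⟨⟨x, x - a, hPR, by lia⟩, x - a, y, hRQ, by lia⟩⟩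
  · exact ⟨R, .inr ⟨⟨x - a, y, hPR, by lia⟩, x, x - a, hRQ, by lia⟩⟩

theorem IsStep.exists_split {P Q : Partition} {a b : ℕ} (h : IsStep P Q (a + b)) :
    ∃ R, IsStep P R a ∧ IsStep R Q b ∨ IsStep P R b ∧ IsStep R Q a := by
  have refl (P : Partition) : IsStep P P 0 := .inl ⟨rfl, rfl⟩
  obtain rfl | ha := a.eq_zero_or_pos
  · exact ⟨P, .inl ⟨refl P, by rwa [zero_add] at h⟩⟩
  obtain rfl | hb := b.eq_zero_or_pos
  · exact ⟨P, .inr ⟨refl P, h⟩⟩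
  obtain ⟨hzero, -⟩ | ⟨-, hhook⟩ := h
  · lia
  · obtain ⟨R, ⟨hPR, hRQ⟩ | ⟨hPR, hRQ⟩⟩ := hhook.exists_split ha hb
    · exact ⟨R, .inl ⟨.inr ⟨ha, hPR⟩, .inr ⟨hb, hRQ⟩⟩⟩
    · exact ⟨R, .inr ⟨.inr ⟨hb, hPR⟩, .inr ⟨ha, hRQ⟩⟩⟩

theorem nonempty_rht_iff {P : Partition} {μ : List ℕ} :
    Nonempty (RHT P μ) ↔ ∃ c : ℕ → Partition, c 0 = Partition.empty ∧ c μ.length = P ∧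
      ∀ j (hj : j < μ.length), IsStep (c (j + 1)) (c j) μ[j] := by
  constructor
  · rintro ⟨T⟩
    refine ⟨fun j => T.chain (Fin.ofNat _ j), T.chain_zero, ?_, fun j hj => ?_⟩
    · exact (congrArg T.chain (Fin.ext (Nat.mod_eq_of_lt (Nat.lt_add_one _)))).trans T.chain_last
    · have hsucc : Fin.ofNat (μ.length + 1) (j + 1) = (⟨j, hj⟩ : Fin μ.length).succ :=
        Fin.ext (Nat.mod_eq_of_lt (Nat.add_lt_add_right hj 1))
      have hcast : Fin.ofNat (μ.length + 1) j = (⟨j, hj⟩ : Fin μ.length).castSucc :=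
        Fin.ext (Nat.mod_eq_of_lt (hj.trans (Nat.lt_add_one _)))
      simpa only [hsucc, hcast, List.get_eq_getElem] using T.step ⟨j, hj⟩
  · rintro ⟨c, hzero, hlast, hstep⟩
    exact ⟨⟨fun j => c j, hzero, hlast, fun j => hstep j j.2⟩⟩

theorem nonempty_rht_append_singleton_iff {P : Partition} {μ : List ℕ} {t : ℕ} :
    Nonempty (RHT P (μ ++ [t])) ↔ ∃ Q, Nonempty (RHT Q μ) ∧ IsStep P Q t := by
  simp only [nonempty_rht_iff, List.length_append, List.length_singleton]
  constructor
  · rintro ⟨c, hzero, rfl, hstep⟩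
    refine ⟨c μ.length, ⟨c, hzero, rfl, fun j hj => ?_⟩, ?_⟩
    · simpa [List.getElem_append_left hj] using hstep j (by lia)
    · simpa using hstep μ.length (Nat.lt_add_one _)
  · rintro ⟨Q, ⟨c, hzero, rfl, hstep⟩, hPQ⟩
    refine ⟨Function.update c (μ.length + 1) P, by simp [hzero], by simp, fun j hj => ?_⟩
    obtain hj | rfl := (Nat.lt_add_one_iff.1 hj).lt_or_eq
    · simpa [List.getElem_append_left hj, hj.ne, (hj.trans (Nat.lt_add_one _)).ne] using hstep j hj
    · simpa using hPQ

theorem IsStep.nonempty_rht_append_replicate {k t : ℕ} {P Q : Partition} {ν : List ℕ}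
    (h : IsStep P Q (k * t)) (hQ : Nonempty (RHT Q ν)) :
    Nonempty (RHT P (ν ++ List.replicate t k)) := by
  induction t generalizing P Q ν with
  | zero =>
    obtain ⟨-, rfl⟩ | ⟨hpos, -⟩ := h
    · simpa using hQ
    · lia
  | succ t ih =>
    rw [mul_add_one] at h
    obtain ⟨R, ⟨hPR, hRQ⟩ | ⟨hPR, hRQ⟩⟩ := h.exists_split
    · rw [List.replicate_succ, List.append_cons]
      exact ih hPR (nonempty_rht_append_singleton_iff.2 ⟨Q, hQ, hRQ⟩)
    · rw [List.replicate_succ', ← List.append_assoc]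
      exact nonempty_rht_append_singleton_iff.2 ⟨R, ih hRQ hQ, hPR⟩

/-- if `k ∣ |λ|`, `p = |λ|/k`, and `RHT_{kμ}^λ ≠ ∅` for some
weak composition `μ` of `p`, then also `RHT_{(k^p)}^λ ≠ ∅`. -/
theorem rht_type_k_pow_p_nonempty (k p : ℕ) (hk : 2 ≤ k) (P : Partition)
    (hp : P.size = k * p) (μ : List ℕ) (hμ : μ.sum = p)
    (h : Nonempty (RHT P (μ.map fun x => k * x))) :
    Nonempty (RHT P (List.replicate p k)) := by
  clear hp
  subst hμ
  induction μ using List.reverseRecOn generalizing P with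
  | nil => exact h
  | append_singleton μ t ih =>
    rw [List.map_append, List.map_singleton, nonempty_rht_append_singleton_iff] at h
    obtain ⟨Q, hQ, hPQ⟩ := h
    rw [List.sum_append, List.sum_singleton, ← List.replicate_append_replicate]
    exact hPQ.nonempty_rht_append_replicate (ih Q hQ)

end RimHookPaper
end

section
/- Let k ≥ 2, p ≥ 1, m = kp. For 1 ≤ i ≤ k set C_i = {(i−1)p+1,…,ip}, let H be the subgroup of S_m consisting of all permutations mapping each block C_i to itself (so H ≅ S_p × … × S_p, k factors), and let σ_0 ∈ S_m be the shift σ_0(x) ≡ x + p (mod m). Then for every partition λ ⊢ m, (1/|H|) · Σ_{σ ∈ σ_0 H} χ^λ(σ) = Σ_{μ ⊢ p} (1/z_μ) · χ^λ_{kμ}. -/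
open scoped BigOperators

namespace RimHookPaper

/-- The shift permutation `σ₀ : x ↦ x + p (mod m)`. -/
def shiftPerm (m p : ℕ) : Equiv.Perm (Fin m) := (finRotate m) ^ p

/-! Identify `Fin (k * p)` with `Fin k × Fin p`. An element of `σ₀H` is then a twisted shift
`(i, x) ↦ (i + 1, σ i x)`. Its cycles all meet the fibre over `0`, to which its first return is
the `k`-th iterate, the monodromy `σ (k - 1) * ⋯ * σ 0`; so its cycle type is `k` times that of the
monodromy. For uniform `σ` the monodromy is uniform on `S_p`, and a permutation in `S_p` has cycle
type `μ` with probability `1 / z_μ`. -/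

section

open Equiv Equiv.Perm Function Finset
open scoped Nat

/-! ### Cycle type and periods -/

section CycleType

variable {α β : Type*}

theorem minimalPeriod_apply_of_semiconj {f : α → α} {g : β → β} {ψ : α → β} (hψ : Injective ψ)
    (h : Semiconj ψ f g) (x : α) : minimalPeriod g (ψ x) = minimalPeriod f x :=
  minimalPeriod_eq_minimalPeriod_iff.2 fun n => by
    rw [IsPeriodicPt, IsFixedPt, IsPeriodicPt, IsFixedPt, ← (h.iterate_right n).eq, hψ.eq_iff]

variable [Fintype α] [DecidableEq α] [Fintype β] [DecidableEq β]

theorem minimalPeriod_eq_card_support {f c : Perm α} (hc : c ∈ f.cycleFactorsFinset) {x : α}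
    (hx : x ∈ c.support) : minimalPeriod f x = #c.support := by
  obtain rfl := cycle_is_cycleOf hx hc
  refine eq_of_forall_dvd fun n => ?_
  rw [← isPeriodicPt_iff_minimalPeriod_dvd, ← (f.isCycleOn_support_cycleOf x).pow_apply_eq hx,
    IsPeriodicPt, IsFixedPt, iterate_eq_pow]

theorem support_eq_biUnion_cycleFactorsFinset (f : Perm α) :
    f.support = f.cycleFactorsFinset.biUnion support := by
  ext x
  rw [mem_biUnion, mem_support_iff_mem_support_of_mem_cycleFactorsFinset]

theorem sum_support_comp_minimalPeriod (f : Perm α) (h : ℕ → ℕ) :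
    ∑ x ∈ f.support, h (minimalPeriod f x) = (f.cycleType.map fun n => n * h n).sum := by
  have hdisj : (f.cycleFactorsFinset : Set (Perm α)).PairwiseDisjoint support :=
    fun c hc d hd hcd => (cycleFactorsFinset_pairwise_disjoint f hc hd hcd).disjoint_support
  rw [support_eq_biUnion_cycleFactorsFinset, sum_biUnion hdisj, cycleType_def, Multiset.map_map]
  refine sum_congr rfl fun c hc => ?_
  rw [sum_congr rfl fun x hx => by rw [minimalPeriod_eq_card_support hc hx], sum_const,
    smul_eq_mul]
  rfl

theorem sum_comp_minimalPeriod (f : Perm α) (h : ℕ → ℕ) :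
    ∑ x, h (minimalPeriod f x) = (f.partition.parts.map fun n => n * h n).sum := by
  have hfixed : ∑ x ∈ f.supportᶜ, h (minimalPeriod f x) = (Fintype.card α - #f.support) * h 1 := by
    rw [← card_compl, ← smul_eq_mul, ← sum_const]
    refine sum_congr rfl fun x hx => ?_
    rw [minimalPeriod_eq_one_iff_isFixedPt.2 (notMem_support.1 (mem_compl.1 hx))]
  rw [← sum_add_sum_compl f.support, sum_support_comp_minimalPeriod, hfixed, parts_partition,
    Multiset.map_add, Multiset.sum_add, Multiset.map_replicate, Multiset.sum_replicate, one_mul,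
    smul_eq_mul]

theorem multiset_eq_of_sum_map_mul_eq {s t : Multiset ℕ} (hs : 0 ∉ s) (ht : 0 ∉ t)
    (h : ∀ w : ℕ → ℕ, (s.map fun n => n * w n).sum = (t.map fun n => n * w n).sum) : s = t := by
  have sum_indicator (u : Multiset ℕ) (N : ℕ) :
      (u.map fun n => n * if n = N then 1 else 0).sum = u.count N * N := by
    induction u using Multiset.induction_on with
    | empty => simp
    | cons a u ih =>
      rw [Multiset.map_cons, Multiset.sum_cons, ih, Multiset.count_cons]
      split_ifs <;> grind
  ext N
  obtain rfl | hN := eq_or_ne N 0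
  · rw [Multiset.count_eq_zero_of_notMem hs, Multiset.count_eq_zero_of_notMem ht]
  · refine Nat.eq_of_mul_eq_mul_right (Nat.pos_of_ne_zero hN) ?_
    rw [← sum_indicator, ← sum_indicator, h]

theorem zero_notMem_parts {n : ℕ} (μ : n.Partition) : 0 ∉ μ.parts :=
  fun h => (μ.parts_pos h).false

theorem partition_permCongr_parts (e : α ≃ β) (f : Perm α) :
    (e.permCongr f).partition.parts = f.partition.parts := by
  refine multiset_eq_of_sum_map_mul_eq (zero_notMem_parts _) (zero_notMem_parts _) fun w => ?_
  rw [← sum_comp_minimalPeriod, ← sum_comp_minimalPeriod, ← e.sum_comp]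
  refine sum_congr rfl fun x _ => ?_
  rw [minimalPeriod_apply_of_semiconj e.injective fun y => ?_]
  simp

end CycleType

/-! ### Twisted shifts -/

section TwistedShift

variable {α : Type*} {k : ℕ}

/-- The product `σ (k - 1) * ⋯ * σ 1 * σ 0`. For a family of permutations it is the first-return
map of `twistedShift σ` to the fibre over `0`. -/
def monodromy {M : Type*} [Monoid M] (σ : Fin k → M) : M :=
  (List.ofFn σ).reverse.prod

theorem monodromy_cons {M : Type*} [Monoid M] (a : M) (σ : Fin k → M) :
    monodromy (Fin.cons a σ : Fin (k + 1) → M) = monodromy σ * a := by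
  simp [monodromy, List.ofFn_succ]

theorem expect_comp_monodromy {G M : Type*} [Group G] [Fintype G] [AddCommMonoid M]
    [Module ℚ≥0 M] [NeZero k] (F : G → M) :
    𝔼 σ : Fin k → G, F (monodromy σ) = 𝔼 g, F g := by
  obtain ⟨k, rfl⟩ := Nat.exists_eq_succ_of_ne_zero (NeZero.ne k)
  calc 𝔼 σ : Fin (k + 1) → G, F (monodromy σ)
      = 𝔼 y : G × (Fin k → G), F (monodromy y.2 * y.1) :=
        (Fintype.expect_equiv (Fin.consEquiv fun _ => G) _ _
          fun y => by rw [← monodromy_cons]; rfl).symm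
    _ = 𝔼 τ : Fin k → G, 𝔼 a, F (monodromy τ * a) := by
        rw [← univ_product_univ, expect_product, expect_comm]
    _ = 𝔼 _τ : Fin k → G, 𝔼 g, F g :=
        expect_congr rfl fun τ _ =>
          Fintype.expect_equiv (Equiv.mulLeft (monodromy τ)) _ _ fun _ => rfl
    _ = 𝔼 g, F g := Fintype.expect_const _

variable [NeZero k]

/-- The permutation `(i, x) ↦ (i + 1, σ i x)` of `Fin k × α`, with `i + 1` taken modulo `k`. -/
def twistedShift (σ : Fin k → Perm α) : Perm (Fin k × α) :=
  prodShear (Equiv.addRight 1) σ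

theorem twistedShift_apply (σ : Fin k → Perm α) (i : Fin k) (x : α) :
    twistedShift σ (i, x) = (i + 1, σ i x) :=
  rfl

theorem val_fin_nsmul_one (n : ℕ) : ((n • (1 : Fin k) : Fin k) : ℕ) = n % k := by
  induction n with
  | zero => simp
  | succ n ih => rw [succ_nsmul, Fin.val_add, ih, Fin.val_one', ← Nat.add_mod]

theorem fin_val_nsmul_one (i : Fin k) : (i : ℕ) • (1 : Fin k) = i :=
  Fin.ext (by rw [val_fin_nsmul_one, Nat.mod_eq_of_lt i.2])

theorem fin_nsmul_one_eq_zero_iff (n : ℕ) : n • (1 : Fin k) = 0 ↔ k ∣ n := by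
  rw [Fin.ext_iff, val_fin_nsmul_one, Fin.val_zero, Nat.dvd_iff_mod_eq_zero]

theorem twistedShift_iterate_apply (σ : Fin k → Perm α) (x : α) {n : ℕ} (hn : n ≤ k) :
    (twistedShift σ)^[n] (0, x) = (n • 1, ((List.ofFn σ).take n).reverse.prod x) := by
  induction n with
  | zero => simp
  | succ n ih =>
    rw [iterate_succ_apply', ih (by lia), twistedShift_apply, succ_nsmul,
      ← List.take_append_getElem (by simpa using hn), List.reverse_append, List.getElem_ofFn,
      List.reverse_singleton, List.singleton_append, List.prod_cons, Perm.mul_apply,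
      fin_val_nsmul_one ⟨n, hn⟩]

theorem twistedShift_iterate_card_apply (σ : Fin k → Perm α) (x : α) :
    (twistedShift σ)^[k] (0, x) = (0, monodromy σ x) := by
  rw [twistedShift_iterate_apply σ x le_rfl, (fin_nsmul_one_eq_zero_iff k).2 dvd_rfl,
    List.take_of_length_le (List.length_ofFn).le, monodromy]

theorem dvd_minimalPeriod_twistedShift (σ : Fin k → Perm α) (y : Fin k × α) :
    k ∣ minimalPeriod (twistedShift σ) y := by
  have hfst : Semiconj Prod.fst (twistedShift σ) (· + 1) := fun _ => rfl
  have h := (isPeriodicPt_minimalPeriod (twistedShift σ) y).map hfst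
  rwa [IsPeriodicPt, IsFixedPt, add_right_iterate, add_eq_left, fin_nsmul_one_eq_zero_iff] at h

theorem minimalPeriod_twistedShift_zero (σ : Fin k → Perm α) (x : α) :
    minimalPeriod (twistedShift σ) (0, x) = k * minimalPeriod ⇑(monodromy σ) x := by
  have hreturn : Semiconj (Prod.mk 0) ⇑(monodromy σ) (twistedShift σ)^[k] :=
    fun x => (twistedShift_iterate_card_apply σ x).symm
  rw [← minimalPeriod_apply_of_semiconj (Prod.mk_right_injective 0) hreturn,
    minimalPeriod_iterate_eq_div_gcd (NeZero.ne k),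
    Nat.gcd_eq_right (dvd_minimalPeriod_twistedShift σ _),
    Nat.mul_div_cancel' (dvd_minimalPeriod_twistedShift σ _)]

variable [Fintype α]

theorem sum_fibre_comp_minimalPeriod_twistedShift (σ : Fin k → Perm α) (w : ℕ → ℕ) (i : Fin k) :
    ∑ x, w (minimalPeriod (twistedShift σ) (i, x)) =
      ∑ x, w (minimalPeriod (twistedShift σ) (0, x)) := by
  have step (i : Fin k) : ∑ x, w (minimalPeriod (twistedShift σ) (i + 1, x)) =
      ∑ x, w (minimalPeriod (twistedShift σ) (i, x)) := by
    rw [← Equiv.sum_comp (σ i)]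
    refine sum_congr rfl fun x _ => ?_
    rw [← twistedShift_apply,
      minimalPeriod_apply ((twistedShift σ).injective.mem_periodicPts (i, x))]
  have iterate (n : ℕ) : ∑ x, w (minimalPeriod (twistedShift σ) (n • 1, x)) =
      ∑ x, w (minimalPeriod (twistedShift σ) (0, x)) := by
    induction n with
    | zero => rw [zero_nsmul]
    | succ n ih => rw [succ_nsmul, step, ih]
  rw [← iterate i, fin_val_nsmul_one]

theorem partition_twistedShift_parts [DecidableEq α] (σ : Fin k → Perm α) :
    (twistedShift σ).partition.parts = (monodromy σ).partition.parts.map (k * ·) := by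
  have hpos : 0 ∉ (monodromy σ).partition.parts.map (k * ·) := by
    simp [NeZero.ne k, zero_notMem_parts]
  refine multiset_eq_of_sum_map_mul_eq (zero_notMem_parts _) hpos fun w => ?_
  calc ((twistedShift σ).partition.parts.map fun n => n * w n).sum
      = ∑ i, ∑ x, w (minimalPeriod (twistedShift σ) (i, x)) := by
        rw [← sum_comp_minimalPeriod, Fintype.sum_prod_type]
    _ = k * ∑ x, w (k * minimalPeriod ⇑(monodromy σ) x) := by
        simp only [sum_fibre_comp_minimalPeriod_twistedShift, minimalPeriod_twistedShift_zero,
          sum_const, card_univ, Fintype.card_fin, smul_eq_mul]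
    _ = (((monodromy σ).partition.parts.map (k * ·)).map fun n => n * w n).sum := by
        rw [sum_comp_minimalPeriod (monodromy σ) fun n => w (k * n), Multiset.map_map,
          ← Multiset.sum_map_mul_left]
        simp only [comp_apply, mul_assoc]

end TwistedShift

/-! ### Averaging over the symmetric group -/

section ClassSum

theorem zpart_add_of_disjoint {s t : Multiset ℕ} (h : Disjoint s t) :
    zpart (s + t) = zpart s * zpart t := by
  have prod_left : ∏ j ∈ s.toFinset, ((s + t).count j)! = ∏ j ∈ s.toFinset, (s.count j)! :=
    prod_congr rfl fun j hj => by
      rw [Multiset.count_add, Multiset.count_eq_zero_of_notMem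
        (Multiset.disjoint_left.1 h (Multiset.mem_toFinset.1 hj)), add_zero]
  have prod_right : ∏ j ∈ t.toFinset, ((s + t).count j)! = ∏ j ∈ t.toFinset, (t.count j)! :=
    prod_congr rfl fun j hj => by
      rw [Multiset.count_add, Multiset.count_eq_zero_of_notMem
        (Multiset.disjoint_right.1 h (Multiset.mem_toFinset.1 hj)), zero_add]
  rw [zpart, zpart, zpart, Multiset.prod_add, Multiset.toFinset_add,
    prod_union (Multiset.disjoint_toFinset.2 h), prod_left, prod_right, mul_mul_mul_comm]

theorem zpart_replicate_one (r : ℕ) : zpart (Multiset.replicate r 1) = r ! := by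
  obtain rfl | hr := eq_or_ne r 0
  · simp [zpart]
  · simp [zpart, Multiset.toFinset_replicate, hr]

theorem filter_two_le_parts_add_replicate {n : ℕ} (μ : n.Partition) :
    μ.parts.filter (2 ≤ ·) + Multiset.replicate (n - (μ.parts.filter (2 ≤ ·)).sum) 1 =
      μ.parts := by
  obtain ⟨r, hr⟩ : ∃ r, μ.parts.filter (¬ 2 ≤ ·) = Multiset.replicate r 1 := by
    refine ⟨_, Multiset.eq_replicate_card.2 fun j hj => ?_⟩
    obtain ⟨hj, hj2⟩ := Multiset.mem_filter.1 hj
    have := μ.parts_pos hj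
    lia
  have hsplit := Multiset.filter_add_not (2 ≤ ·) μ.parts
  rw [hr] at hsplit
  have hsum : (μ.parts.filter (2 ≤ ·)).sum + r = n := by
    simpa [μ.parts_sum] using congrArg Multiset.sum hsplit
  rwa [← Nat.eq_sub_of_add_eq' hsum]

variable {α : Type*} [Fintype α] [DecidableEq α]

theorem exists_perm_partition_eq (μ : (Fintype.card α).Partition) :
    ∃ g : Perm α, g.partition = μ := by
  have hsplit := filter_two_le_parts_add_replicate μ
  have hsum : (μ.parts.filter (2 ≤ ·)).sum ≤ Fintype.card α := by
    have := congrArg Multiset.sum hsplit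
    rw [Multiset.sum_add, μ.parts_sum] at this
    lia
  obtain ⟨g, hg⟩ := (exists_with_cycleType_iff α).2
    ⟨hsum, fun _ hj => (Multiset.mem_filter.1 hj).2⟩
  refine ⟨g, Nat.Partition.ext ?_⟩
  rw [parts_partition, ← sum_cycleType, hg, hsplit]

theorem zpart_partition (g : Perm α) :
    zpart g.partition.parts = (Fintype.card α - g.cycleType.sum)! * g.cycleType.prod *
      ∏ n ∈ g.cycleType.toFinset, (g.cycleType.count n)! := by
  have hdisj : Disjoint g.cycleType (Multiset.replicate (Fintype.card α - #g.support) 1) :=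
    Multiset.disjoint_left.2 fun hj hj1 =>
      (one_lt_of_mem_cycleType hj).ne' (Multiset.eq_of_mem_replicate hj1)
  rw [parts_partition, zpart_add_of_disjoint hdisj, zpart_replicate_one, sum_cycleType, zpart]
  ring

theorem card_partition_eq_mul_zpart (μ : (Fintype.card α).Partition) :
    #{g : Perm α | g.partition = μ} * zpart μ.parts = (Fintype.card α)! := by
  obtain ⟨g, rfl⟩ := exists_perm_partition_eq μ
  simp only [← partition_eq_of_isConj, isConj_iff_cycleType_eq]
  rw [zpart_partition, card_of_cycleType_mul_eq,
    if_pos ⟨sum_cycleType_le g, fun _ => two_le_of_mem_cycleType⟩]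

theorem expect_comp_partition {M : Type*} [AddCommMonoid M] [Module ℚ≥0 M]
    (F : Multiset ℕ → M) :
    𝔼 g : Perm α, F g.partition.parts =
      ∑ μ : (Fintype.card α).Partition, (zpart μ.parts : ℚ≥0)⁻¹ • F μ.parts := by
  rw [expect_univ, Fintype.card_perm, ← sum_fiberwise univ partition, smul_sum]
  refine sum_congr rfl fun μ _ => ?_
  have hclass : ∑ g : Perm α with g.partition = μ, F g.partition.parts =
      (#{g : Perm α | g.partition = μ} : ℚ≥0) • F μ.parts := by
    rw [sum_congr rfl fun g hg => by rw [(mem_filter.1 hg).2], sum_const, Nat.cast_smul_eq_nsmul]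
  have hcard := card_partition_eq_mul_zpart μ
  have hne : (#{g : Perm α | g.partition = μ} : ℚ≥0) ≠ 0 :=
    Nat.cast_ne_zero.2 (left_ne_zero_of_mul (hcard ▸ Nat.factorial_ne_zero _))
  rw [hclass, smul_smul, ← hcard, Nat.cast_mul, mul_inv_rev, inv_mul_cancel_right₀ hne]

end ClassSum

/-! ### Block-preserving permutations -/

section Blocks

theorem prodCongrRight_injective {ι α : Type*} :
    Injective (prodCongrRight : (ι → Perm α) → Perm (ι × α)) := by
  intro σ τ h
  ext i x
  simpa using congrArg (fun ρ : Perm (ι × α) => (ρ (i, x)).2) h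

theorem exists_prodCongrRight_eq_iff {ι α : Type*} (ρ : Perm (ι × α)) :
    (∃ σ : ι → Perm α, prodCongrRight σ = ρ) ↔ ∀ y, (ρ y).1 = y.1 := by
  refine ⟨?_, fun h => ?_⟩
  · rintro ⟨σ, rfl⟩ y
    rfl
  have hsymm (y : ι × α) : (ρ.symm y).1 = y.1 := by rw [← h, ρ.apply_symm_apply]
  have happly (i : ι) (x : α) : ρ (i, x) = (i, (ρ (i, x)).2) := Prod.ext (h _) rfl
  have hsymm_apply (i : ι) (x : α) : ρ.symm (i, x) = (i, (ρ.symm (i, x)).2) :=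
    Prod.ext (hsymm _) rfl
  refine ⟨fun i => ⟨fun x => (ρ (i, x)).2, fun x => (ρ.symm (i, x)).2, fun x => ?_, fun x => ?_⟩,
    Equiv.ext fun y => (happly _ _).symm⟩
  · dsimp only
    rw [← happly, ρ.symm_apply_apply]
  · dsimp only
    rw [← hsymm_apply, ρ.apply_symm_apply]

variable (k p : ℕ)

/-- The subgroup `H` of `S_{kp}` preserving each of the `k` blocks of `p` consecutive points, as a
finset: the block of `x` is `x / p`. -/
def blockStabilizer : Finset (Perm (Fin (k * p))) :=
  {ρ | ∀ x : Fin (k * p), (ρ x : ℕ) / p = (x : ℕ) / p}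

variable {k p}

/-- The permutation of `Fin (k * p)` acting by `σ i` on the `i`-th block. -/
def blockPerm (σ : Fin k → Perm (Fin p)) : Perm (Fin (k * p)) :=
  finProdFinEquiv.permCongr (prodCongrRight σ)

theorem blockPerm_injective : Injective (blockPerm : (Fin k → Perm (Fin p)) → _) :=
  finProdFinEquiv.permCongr.injective.comp prodCongrRight_injective

theorem mem_blockStabilizer_iff (ρ : Perm (Fin (k * p))) :
    ρ ∈ blockStabilizer k p ↔ ∃ σ, blockPerm σ = ρ := by
  simp only [blockPerm, ← Equiv.eq_symm_apply, exists_prodCongrRight_eq_iff, blockStabilizer,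
    mem_filter_univ]
  refine finProdFinEquiv.symm.forall_congr fun x => ?_
  rw [permCongr_symm, permCongr_apply, symm_symm, apply_symm_apply, Fin.ext_iff]
  rfl

theorem expect_blockStabilizer {M : Type*} [AddCommMonoid M] [Module ℚ≥0 M]
    (F : Perm (Fin (k * p)) → M) :
    𝔼 ρ ∈ blockStabilizer k p, F ρ = 𝔼 σ : Fin k → Perm (Fin p), F (blockPerm σ) := by
  have himage : blockStabilizer k p = univ.image blockPerm := by
    ext ρ
    simp only [mem_blockStabilizer_iff, mem_image, mem_univ, true_and]
  rw [himage, expect_image blockPerm_injective.injOn]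

theorem finRotate_pow_apply_val {m : ℕ} (n : ℕ) (x : Fin m) :
    ((finRotate m ^ n) x : ℕ) = (x + n) % m := by
  induction n with
  | zero => simp [Nat.mod_eq_of_lt x.2]
  | succ n ih =>
    have := x.neZero
    simp [pow_succ', finRotate_apply, Fin.val_add, ih, add_assoc]

theorem shiftPerm_finProdFinEquiv [NeZero k] (i : Fin k) (x : Fin p) :
    shiftPerm (k * p) p (finProdFinEquiv (i, x)) = finProdFinEquiv (i + 1, x) := by
  ext
  rw [shiftPerm, finRotate_pow_apply_val, finProdFinEquiv_apply_val, finProdFinEquiv_apply_val,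
    mul_comm k p, add_assoc, ← Nat.mul_succ, Nat.mod_mul, Nat.add_mul_mod_self_left,
    Nat.add_mul_div_left _ _ x.pos, Nat.mod_eq_of_lt x.2, Nat.div_eq_of_lt x.2, zero_add]
  simp [Fin.val_add]

theorem shiftPerm_mul_blockPerm [NeZero k] (σ : Fin k → Perm (Fin p)) :
    shiftPerm (k * p) p * blockPerm σ = finProdFinEquiv.permCongr (twistedShift σ) := by
  refine Equiv.ext fun y => ?_
  obtain ⟨⟨i, x⟩, rfl⟩ := finProdFinEquiv.surjective y
  simp only [blockPerm, Perm.mul_apply, permCongr_apply, symm_apply_apply, prodCongrRight_apply,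
    shiftPerm_finProdFinEquiv, twistedShift_apply]

end Blocks

theorem chiPerm_eq_chi_partition (P : Partition) {m : ℕ} (ρ : Perm (Fin m)) :
    chiPerm P ρ = chi P ρ.partition.parts := by
  rw [chiPerm, parts_partition, Fintype.card_fin, sum_cycleType]

theorem coset_character_sum_eq_partition_sum_general {M : Type*} [AddCommMonoid M] [Module ℚ≥0 M]
    (k p : ℕ) [NeZero k] (F : Multiset ℕ → M) :
    𝔼 ρ ∈ blockStabilizer k p, F (shiftPerm (k * p) p * ρ).partition.parts =
      ∑ μ : p.Partition, (zpart μ.parts : ℚ≥0)⁻¹ • F (μ.parts.map (k * ·)) := by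
  calc 𝔼 ρ ∈ blockStabilizer k p, F (shiftPerm (k * p) p * ρ).partition.parts
      = 𝔼 σ : Fin k → Perm (Fin p), F ((monodromy σ).partition.parts.map (k * ·)) := by
        simp only [expect_blockStabilizer, shiftPerm_mul_blockPerm, partition_permCongr_parts,
          partition_twistedShift_parts]
    _ = 𝔼 g : Perm (Fin p), F (g.partition.parts.map (k * ·)) :=
        expect_comp_monodromy fun g : Perm (Fin p) => F (g.partition.parts.map (k * ·))
    _ = ∑ μ : p.Partition, (zpart μ.parts : ℚ≥0)⁻¹ • F (μ.parts.map (k * ·)) := by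
        rw [expect_comp_partition fun μ : Multiset ℕ => F (μ.map (k * ·)), Fintype.card_fin]

end

/-- for `m = kp`, blocks `Cᵢ = {(i−1)p+1,…,ip}` (here 0-based:
the block of `x` is `x / p`), `H ≤ S_m` the subgroup of permutations preserving
each block, and `σ₀` the shift by `p`, one has, for every `λ ⊢ m`:
`(1/|H|) Σ_{σ ∈ σ₀H} χ^λ(σ) = Σ_{μ ⊢ p} (1/z_μ) χ^λ_{kμ}`. -/
theorem coset_character_sum_eq_partition_sum (k p : ℕ) (hk : 2 ≤ k) (hp : 1 ≤ p)
    (P : Partition) (hP : P.size = k * p) :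
    (1 / ((Finset.univ.filter fun σ : Equiv.Perm (Fin (k * p)) =>
        ∀ x : Fin (k * p), ((σ x : ℕ) / p = (x : ℕ) / p)).card : ℚ)) *
      ∑ σ ∈ (Finset.univ.filter fun σ : Equiv.Perm (Fin (k * p)) =>
          ∀ x : Fin (k * p), ((σ x : ℕ) / p = (x : ℕ) / p)),
        (chiPerm P (shiftPerm (k * p) p * σ) : ℚ) =
    ∑ μ : Nat.Partition p, (1 / (zpart μ.parts : ℚ)) *
      (chi P (μ.parts.map fun x => k * x) : ℚ) := by
  have : NeZero k := ⟨by lia⟩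
  simpa [blockStabilizer, Finset.expect_eq_sum_div_card, div_eq_inv_mul, NNRat.smul_def,
    chiPerm_eq_chi_partition] using
    coset_character_sum_eq_partition_sum_general k p fun ν => (chi P ν : ℚ)

end RimHookPaper
end
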